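/- arXiv:1702.04915 — 2 statements merged into one kernel-verified Lean document; each statement's English description precedes it below -/
import Mathlib

section
/- There exists δ > 0 such that lim_{L→∞} P_{unif,L}( there exists an index i with δ log L ≤ i ≤ γ_L(π) and E_i(π) = 1 ) = 0. In words: with probability tending to 1, none of the excursions of the uniform prudent walk beyond the first δ log L ones crosses the range of the walk. -/
open Filter Set

/-- One admissible step of a nearest-neighbour walk on `ℤ²`. -/
def IsStep (s : ℤ × ℤ) : Prop :=
  s = (1, 0) ∨ s = (-1, 0) ∨ s = (0, 1) ∨ s = (0, -1)

/-- The set `Ω_L` of prudent paths of length `L`. -/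
def prudentSet (L : ℕ) : Set (Fin (L + 1) → ℤ × ℤ) :=
  {π | π 0 = (0, 0) ∧ ∀ i : Fin L,
    IsStep (π i.succ - π i.castSucc) ∧
    ∀ k : ℕ, 1 ≤ k → ∀ j : Fin (L + 1), j ≤ i.castSucc →
      π i.castSucc + (k : ℤ) • (π i.succ - π i.castSucc) ≠ π j}

/-- The uniform probability of a set `A` of paths under `P_{unif,L}`. -/
noncomputable def probUnif (L : ℕ) (A : Set (Fin (L + 1) → ℤ × ℤ)) : ℝ :=
  (Nat.card ↥(A ∩ prudentSet L) : ℝ) / (Nat.card ↥(prudentSet L) : ℝ)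

/-- Coercion `ℤ² → ℝ²`. -/
def toR (p : ℤ × ℤ) : ℝ × ℝ := ((p.1 : ℝ), (p.2 : ℝ))

/-- The rescaled interpolated path `π̃^L : [0,1] → ℝ²`. -/
noncomputable def rescaled (L : ℕ) (π : Fin (L + 1) → ℤ × ℤ) (t : ℝ) : ℝ × ℝ :=
  let n : ℕ := ⌊t * L⌋₊
  let p : ℝ × ℝ := toR (π ⟨min n L, by omega⟩)
  let q : ℝ × ℝ := toR (π ⟨min (n + 1) L, by omega⟩)
  (L : ℝ)⁻¹ • (p + (t * L - (n : ℝ)) • (q - p))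

/-- Euclidean norm on `ℝ²`. -/
noncomputable def enorm2 (v : ℝ × ℝ) : ℝ := Real.sqrt (v.1 ^ 2 + v.2 ^ 2)

/-- The four diagonal directions. -/
def evec : ℕ → ℝ × ℝ
  | 1 => (1, 1)
  | 2 => (-1, 1)
  | 3 => (-1, -1)
  | 4 => (1, -1)
  | _ => (0, 0)
/-- `H_t(π)`: the height of the range of `π` up to time `t` (the time is clamped to `L`). -/
noncomputable def heightAt (L : ℕ) (π : Fin (L + 1) → ℤ × ℤ) (t : ℕ) : ℕ :=
  ((Finset.Iic (⟨min t L, by omega⟩ : Fin (L + 1))).image (fun i => (π i).2)).card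

/-- `W_t(π)`: the width of the range of `π` up to time `t` (the time is clamped to `L`). -/
noncomputable def widthAt (L : ℕ) (π : Fin (L + 1) → ℤ × ℤ) (t : ℕ) : ℕ :=
  ((Finset.Iic (⟨min t L, by omega⟩ : Fin (L + 1))).image (fun i => (π i).1)).card

open Classical in
/-- `min{t ∈ (a, L] : f(t) > f(t−1)} − 1`, or `none` if no such time exists. -/
noncomputable def nextTime (L : ℕ) (f : ℕ → ℕ) (a : ℕ) : Option ℕ :=
  if h : ∃ t : ℕ, a < t ∧ t ≤ L ∧ f (t - 1) < f t then some (Nat.find h - 1) else none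

/-- The sequence `s_0 = 0 ≤ s_1 ≤ s_2 ≤ ⋯` of excursion endpoints of `π`
(`s_{2k+1} = ρ_{k+1}` is obtained from the height, `s_{2k+2} = υ_{k+1}` from the width);
`none` encodes the value `+∞`. -/
noncomputable def excTime (L : ℕ) (π : Fin (L + 1) → ℤ × ℤ) : ℕ → Option ℕ
  | 0 => some 0
  | (i + 1) => (excTime L π i).bind fun a =>
      nextTime L (if Even i then heightAt L π else widthAt L π) a

/-- The largest index `i` with `s_i` finite. -/
noncomputable def lastIdx (L : ℕ) (π : Fin (L + 1) → ℤ × ℤ) : ℕ :=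
  sSup {i : ℕ | (excTime L π i).isSome}

/-- The endpoint `s_i` of the `i`-th excursion, where an infinite value is replaced
by `L` (so that the final, possibly incomplete, segment runs up to time `L`). -/
noncomputable def excEnd (L : ℕ) (π : Fin (L + 1) → ℤ × ℤ) (i : ℕ) : ℕ :=
  (excTime L π i).getD L

/-- `T_i(π) = s_i − s_{i−1}`, the length of the `i`-th excursion. -/
noncomputable def excLen (L : ℕ) (π : Fin (L + 1) → ℤ × ℤ) (i : ℕ) : ℕ :=
  excEnd L π i - excEnd L π (i - 1)

/-- The final segment of `π` can be completed into a full excursion by adding a single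
extra step: some one-step prudent extension of `π` has a finite next excursion endpoint. -/
def finalSegmentCompletable (L : ℕ) (π : Fin (L + 1) → ℤ × ℤ) : Prop :=
  ∃ π' : Fin (L + 2) → ℤ × ℤ, (∀ i : Fin (L + 1), π' i.castSucc = π i) ∧
    π' ∈ prudentSet (L + 1) ∧ (excTime (L + 1) π' (lastIdx L π + 1)).isSome

open Classical in
/-- `γ_L(π)`: the number of complete excursions of `π`, counting the final segment when it
can be completed by a single extra step. -/
noncomputable def numExc (L : ℕ) (π : Fin (L + 1) → ℤ × ℤ) : ℕ :=
  lastIdx L π + if finalSegmentCompletable L π then 1 else 0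

/-- `E_i(π) = 1`: the `i`-th excursion crosses the range, i.e. a horizontal (odd `i`)
excursion traverses the full height of the range at its completion time, and a vertical
(even `i`) one the full width. -/
noncomputable def crossesRange (L : ℕ) (π : Fin (L + 1) → ℤ × ℤ) (i : ℕ) : Prop :=
  if i % 2 = 1 then
    ((π ⟨min (excEnd L π i) L, by omega⟩).2 -
        (π ⟨min (excEnd L π (i - 1)) L, by omega⟩).2).natAbs =
      heightAt L π (excEnd L π i) - 1
  else
    ((π ⟨min (excEnd L π i) L, by omega⟩).1 -
        (π ⟨min (excEnd L π (i - 1)) L, by omega⟩).1).natAbs =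
      widthAt L π (excEnd L π i) - 1
/-- Abstract state of a prudent path. -/
inductive PSt where
  | S : PSt
  | O (k p q : ℕ) (ax : Bool) : PSt
  | N (f b k : ℕ) (ax : Bool) : PSt

namespace PSt

/-- Sideways child of an `O` state. -/
def sideChild (k p q : ℕ) (ax : Bool) : PSt :=
  if p = 0 then O (q + 1) 0 k (!ax) else N (p - 1) (q + 1) k (!ax)

/-- Forward child of an `N` state. -/
def fwdChild (f b k : ℕ) (ax : Bool) : PSt :=
  if f = 0 then O (b + 1) 0 k ax else N (f - 1) (b + 1) k ax

/-- Children of a state. -/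
def children : PSt → List PSt
  | S => [O 1 0 0 true, O 1 0 0 true, O 1 0 0 false, O 1 0 0 false]
  | O k p q ax => [O (k + 1) p q ax, sideChild k p q ax, sideChild k q p ax]
  | N f b k ax => [fwdChild f b k ax, O (k + 1) f b (!ax)]

/-- The states which are entered by a step that expands the range along the axis `m`. -/
def forb (m : Bool) : PSt → Bool
  | O _ _ _ ax => ax == m
  | _ => false

/-- Number of continuations. -/
def R (m : Bool) (J : ℕ → Bool) : ℕ → PSt → ℕ
  | 0, _ => 1
  | (n + 1), σ => ((children σ).map fun c => if J n && forb m c then 0 else R m J n c).sum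

/-- Unrestricted number of continuations. -/
def R0 : ℕ → PSt → ℕ := R true (fun _ => false)

lemma R0_zero (σ : PSt) : R0 0 σ = 1 := rfl

lemma R0_succ (n : ℕ) (σ : PSt) : R0 (n + 1) σ = ((children σ).map fun c => R0 n c).sum := by
  simp [R0, R]

lemma exists_z : ∃ z : ℝ, 2 / 5 < z ∧ z < 41 / 100 ∧ 1 - 2 * z - 2 * z ^ 2 + 2 * z ^ 3 = 0 := by
  have hc : ContinuousOn (fun z : ℝ => 1 - 2 * z - 2 * z ^ 2 + 2 * z ^ 3) (Set.Icc (2/5) (41/100)) := by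
    fun_prop
  have := intermediate_value_Ioo' (by norm_num) hc
  have h0 : (0 : ℝ) ∈ Set.Ioo ((fun z : ℝ => 1 - 2 * z - 2 * z ^ 2 + 2 * z ^ 3) (41/100))
      ((fun z : ℝ => 1 - 2 * z - 2 * z ^ 2 + 2 * z ^ 3) (2/5)) := by
    constructor <;> norm_num
  obtain ⟨z, hz, h⟩ := this h0
  exact ⟨z, hz.1, hz.2, h⟩

/-- The lower potential. -/
noncomputable def hlow (z : ℝ) : PSt → ℝ
  | S => 1
  | O _ p q _ => max ((2 * z) ^ p) ((2 * z) ^ q)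
  | N f b _ _ => max ((2 * z) ^ (f + 1)) ((1 - z) * (2 * z) ^ b)

section
variable {z : ℝ} (h1 : 2 / 5 < z) (h2 : z < 41 / 100) (h3 : 1 - 2 * z - 2 * z ^ 2 + 2 * z ^ 3 = 0)

lemma hlow_side_ge (h1 : 2 / 5 < z) (h2 : z < 41 / 100) (k p q : ℕ) (ax : Bool) :
    (2 * z) ^ p ≤ hlow z (sideChild k p q ax) ∧
    (1 - z) * (2 * z) ^ (q + 1) ≤ hlow z (sideChild k p q ax) := by
  unfold sideChild
  have hr : (2 * z) ^ (q + 1) ≤ 1 := pow_le_one₀ (by linarith) (by linarith)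
  have hr0 : 0 ≤ (2 * z) ^ (q + 1) := pow_nonneg (by linarith) _
  split_ifs with h
  · subst h
    simp only [hlow, pow_zero]
    refine ⟨le_max_left _ _, le_max_of_le_left ?_⟩
    nlinarith
  · obtain ⟨p, rfl⟩ := Nat.exists_eq_succ_of_ne_zero h
    simp only [hlow, Nat.succ_eq_add_one, Nat.add_sub_cancel]
    exact ⟨le_max_left _ _, le_max_right _ _⟩

lemma hlow_fwd_ge (h1 : 2 / 5 < z) (h2 : z < 41 / 100) (k f b : ℕ) (ax : Bool) :
    (2 * z) ^ f ≤ hlow z (fwdChild f b k ax) ∧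
    (1 - z) * (2 * z) ^ (b + 1) ≤ hlow z (fwdChild f b k ax) := by
  have := hlow_side_ge h1 h2 k f b (!ax)
  unfold sideChild at this
  unfold fwdChild
  simpa using this

lemma hlow_sub (h1 : 2 / 5 < z) (h2 : z < 41 / 100) (h3 : 1 - 2 * z - 2 * z ^ 2 + 2 * z ^ 3 = 0)
    (σ : PSt) : hlow z σ ≤ z * ((children σ).map (hlow z)).sum := by
  cases σ with
  | S =>
    simp [children, hlow]; linarith
  | O k p q ax =>
    have a := hlow_side_ge h1 h2 k p q ax
    have b := hlow_side_ge h1 h2 k q p ax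
    simp only [children, List.map_cons, List.map_nil, List.sum_cons, List.sum_nil, add_zero]
    have c1 : (2 * z) ^ p ≤ hlow z (O (k + 1) p q ax) := le_max_left _ _
    have c2 : (2 * z) ^ q ≤ hlow z (O (k + 1) p q ax) := le_max_right _ _
    have key : ∀ x : ℝ, z * (x + x + (1 - z) * (x * (2 * z))) = x := by
      intro x; linear_combination -x * h3
    rw [pow_succ] at a b
    refine max_le ?_ ?_
    · rw [← key ((2 * z) ^ p)]
      exact mul_le_mul_of_nonneg_left (by linarith [a.1, b.2]) (by linarith)
    · rw [← key ((2 * z) ^ q)]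
      exact mul_le_mul_of_nonneg_left (by linarith [b.1, a.2]) (by linarith)
  | N f b k ax =>
    have a := hlow_fwd_ge h1 h2 k f b ax
    simp only [children, List.map_cons, List.map_nil, List.sum_cons, List.sum_nil, add_zero]
    have c1 : (2 * z) ^ f ≤ hlow z (O (k + 1) f b (!ax)) := le_max_left _ _
    have c2 : (2 * z) ^ b ≤ hlow z (O (k + 1) f b (!ax)) := le_max_right _ _
    have key : ∀ x : ℝ, z * ((1 - z) * (x * (2 * z)) + x) = (1 - z) * x := by
      intro x; linear_combination -x * h3
    rw [pow_succ (2 * z) b] at a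
    refine max_le ?_ ?_
    · have : (2 * z) ^ (f + 1) = z * ((2 * z) ^ f + (2 * z) ^ f) := by ring
      rw [this]
      gcongr
      linarith
    · rw [← key ((2 * z) ^ b)]
      gcongr
      linarith

lemma hlow_le_one (h1 : 2 / 5 < z) (h2 : z < 41 / 100) (σ : PSt) : hlow z σ ≤ 1 := by
  have hr : ∀ n : ℕ, (2 * z) ^ n ≤ 1 := fun n => pow_le_one₀ (by linarith) (by linarith)
  have hr0 : ∀ n : ℕ, 0 ≤ (2 * z) ^ n := fun n => pow_nonneg (by linarith) _
  cases σ with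
  | S => exact le_rfl
  | O k p q ax => exact max_le (hr _) (hr _)
  | N f b k ax =>
    refine max_le (hr _) ?_
    nlinarith [hr b, hr0 b]

lemma list_sum_map_le {α : Type*} (l : List α) (f g : α → ℝ) (h : ∀ a ∈ l, f a ≤ g a) :
    (l.map f).sum ≤ (l.map g).sum := List.sum_le_sum h

lemma R0_lower (h1 : 2 / 5 < z) (h2 : z < 41 / 100) (h3 : 1 - 2 * z - 2 * z ^ 2 + 2 * z ^ 3 = 0)
    (n : ℕ) (σ : PSt) : hlow z σ ≤ z ^ n * (R0 n σ : ℝ) := by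
  induction n generalizing σ with
  | zero => simpa [R0_zero] using hlow_le_one h1 h2 σ
  | succ n ih =>
    refine (hlow_sub h1 h2 h3 σ).trans ?_
    rw [R0_succ, pow_succ', mul_assoc]
    gcongr
    push_cast
    rw [List.map_map, ← List.sum_map_mul_left]
    exact list_sum_map_le _ _ _ fun a _ => ih a

/-- The weight absorbing the corner errors. -/
noncomputable def Aw (z : ℝ) (n : ℕ) : ℝ := Real.exp ((2 * z) ^ n / (1 - 2 * z))

lemma Aw_one_le (h1 : 2 / 5 < z) (h2 : z < 41 / 100) (n : ℕ) : 1 ≤ Aw z n := by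
  have : 0 < 1 - 2 * z := by linarith
  have : 0 ≤ 2 * z := by linarith
  exact Real.one_le_exp (by positivity)

lemma Aw_le (h1 : 2 / 5 < z) (h2 : z < 41 / 100) (n : ℕ) : Aw z n ≤ Aw z 0 := by
  have : 0 < 1 - 2 * z := by linarith
  unfold Aw
  rw [Real.exp_le_exp]
  gcongr ?_ / _
  simpa using pow_le_one₀ (n := n) (by linarith : 0 ≤ 2 * z) (by linarith)

lemma Aw_step (h1 : 2 / 5 < z) (h2 : z < 41 / 100) (n : ℕ) :
    Aw z (n + 1) * (1 + (2 * z) ^ n) ≤ Aw z n := by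
  have h : 0 < 1 - 2 * z := by linarith
  have : Aw z n = Aw z (n + 1) * Real.exp ((2 * z) ^ n) := by
    unfold Aw
    rw [← Real.exp_add]
    congr 1
    field_simp
    ring
  rw [this]
  have := Real.add_one_le_exp ((2 * z) ^ n)
  have h0 : 0 ≤ Aw z (n + 1) := (Real.exp_pos _).le
  gcongr
  linarith

/-- Main part of the upper potential. -/
noncomputable def hup (z : ℝ) : PSt → ℝ
  | S => 0
  | O k p q _ => Aw z (p + q + 1) * Aw z k * ((2 * z) ^ p + (2 * z) ^ q)
  | N f b k _ => Aw z (f + b + 1) * Aw z k * ((2 * z) ^ (f + 1) + (1 - z) * (2 * z) ^ b)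

/-- Auxiliary part of the upper potential. -/
noncomputable def gup : PSt → ℝ
  | S => 4
  | O _ _ _ _ => 7 / 5
  | N _ _ _ _ => 1

lemma gup_one_le (σ : PSt) : 1 ≤ gup σ := by cases σ <;> norm_num [gup]
lemma gup_le (σ : PSt) : gup σ ≤ 4 := by cases σ <;> norm_num [gup]

lemma hup_side_le (h1 : 2 / 5 < z) (h2 : z < 41 / 100) (k p q : ℕ) (ax : Bool) :
    hup z (sideChild k p q ax) ≤
      Aw z (p + q + 1) * Aw z k * ((2 * z) ^ p + (1 - z) * (2 * z) ^ (q + 1)) := by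
  unfold sideChild
  have hq : 0 ≤ (2 * z) ^ (q + 1) := pow_nonneg (by linarith) _
  have ha := Aw_one_le h1 h2
  split_ifs with h
  · subst h
    simp only [hup, pow_zero, zero_add]
    have hs := Aw_step h1 h2 k
    calc Aw z (k + 1) * Aw z (q + 1) * (1 + (2 * z) ^ k)
        = Aw z (q + 1) * (Aw z (k + 1) * (1 + (2 * z) ^ k)) := by ring
      _ ≤ Aw z (q + 1) * Aw z k := by
        have := ha (q + 1)
        gcongr
      _ ≤ _ := by
        have := ha (q + 1)
        have := ha k
        apply le_mul_of_one_le_right (by positivity)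
        nlinarith
  · obtain ⟨p, rfl⟩ := Nat.exists_eq_succ_of_ne_zero h
    simp only [hup, Nat.succ_eq_add_one, Nat.add_sub_cancel]
    rw [show p + (q + 1) + 1 = p + 1 + q + 1 by ring]

lemma hup_fwd_le (h1 : 2 / 5 < z) (h2 : z < 41 / 100) (k f b : ℕ) (ax : Bool) :
    hup z (fwdChild f b k ax) ≤
      Aw z (f + b + 1) * Aw z k * ((2 * z) ^ f + (1 - z) * (2 * z) ^ (b + 1)) := by
  have := hup_side_le h1 h2 k f b (!ax)
  unfold sideChild at this
  unfold fwdChild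
  simpa using this

lemma hup_O_le (h1 : 2 / 5 < z) (h2 : z < 41 / 100) (k p q : ℕ) (ax : Bool) :
    hup z (O (k + 1) p q ax) ≤ Aw z (p + q + 1) * Aw z k * ((2 * z) ^ p + (2 * z) ^ q) := by
  have hq : ∀ n, 0 ≤ (2 * z) ^ n := fun n => pow_nonneg (by linarith) _
  have ha := Aw_one_le h1 h2
  have hs := Aw_step h1 h2 k
  have : Aw z (k + 1) ≤ Aw z k := by nlinarith [hq k, ha (k + 1)]
  have := ha (p + q + 1)
  have := hq p
  have := hq q
  simp only [hup]
  gcongr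

lemma hup_super (h1 : 2 / 5 < z) (h2 : z < 41 / 100) (h3 : 1 - 2 * z - 2 * z ^ 2 + 2 * z ^ 3 = 0)
    (σ : PSt) (hσ : σ ≠ S) : z * ((children σ).map (hup z)).sum ≤ hup z σ := by
  cases σ with
  | S => exact absurd rfl hσ
  | O k p q ax =>
    have a := hup_side_le h1 h2 k p q ax
    have b := hup_side_le h1 h2 k q p ax
    have c := hup_O_le h1 h2 k p q ax
    rw [show q + p + 1 = p + q + 1 by ring] at b
    simp only [children, List.map_cons, List.map_nil, List.sum_cons, List.sum_nil, add_zero]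
    have e : hup z (O k p q ax) = z * (Aw z (p + q + 1) * Aw z k * ((2 * z) ^ p + (2 * z) ^ q) +
      (Aw z (p + q + 1) * Aw z k * ((2 * z) ^ p + (1 - z) * (2 * z) ^ (q + 1)) +
      Aw z (p + q + 1) * Aw z k * ((2 * z) ^ q + (1 - z) * (2 * z) ^ (p + 1)))) := by
      simp only [hup, pow_succ]
      linear_combination (Aw z (p + q + 1) * Aw z k * ((2 * z) ^ p + (2 * z) ^ q)) * h3
    rw [e]
    gcongr
  | N f b k ax =>
    have a := hup_fwd_le h1 h2 k f b ax
    have c := hup_O_le h1 h2 k f b (!ax)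
    simp only [children, List.map_cons, List.map_nil, List.sum_cons, List.sum_nil, add_zero]
    have e : hup z (N f b k ax) = z * (
      Aw z (f + b + 1) * Aw z k * ((2 * z) ^ f + (1 - z) * (2 * z) ^ (b + 1)) +
      Aw z (f + b + 1) * Aw z k * ((2 * z) ^ f + (2 * z) ^ b)) := by
      simp only [hup, pow_succ]
      linear_combination (Aw z (f + b + 1) * Aw z k * ((2 * z) ^ b)) * h3
    rw [e]
    gcongr

lemma gup_side (k p q : ℕ) (ax : Bool) :
    gup (sideChild k p q ax) = if p = 0 then 7 / 5 else 1 := by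
  unfold sideChild; split_ifs <;> rfl

lemma gup_fwd (k p q : ℕ) (ax : Bool) :
    gup (fwdChild p q k ax) = if p = 0 then 7 / 5 else 1 := by
  unfold fwdChild; split_ifs <;> rfl

lemma hup_nonneg (h1 : 2 / 5 < z) (h2 : z < 41 / 100) (σ : PSt) : 0 ≤ hup z σ := by
  have ha := Aw_one_le h1 h2
  have hq : ∀ n, 0 ≤ (2 * z) ^ n := fun n => pow_nonneg (by linarith) _
  have h0 : 0 ≤ 1 - z := by linarith
  have ha0 : ∀ n, 0 ≤ Aw z n := fun n => by linarith [ha n]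
  cases σ with
  | S => exact le_rfl
  | O k p q ax =>
    have := hq p; have := hq q; have := ha0 k; have := ha0 (p + q + 1)
    simp only [hup]; positivity
  | N f b k ax =>
    have := hq (f + 1); have := hq b; have := ha0 k; have := ha0 (f + b + 1)
    simp only [hup]; positivity

lemma gup_super (h1 : 2 / 5 < z) (h2 : z < 41 / 100)
    (σ : PSt) (hσ : σ ≠ S) : z * ((children σ).map gup).sum ≤ gup σ + hup z σ := by
  have ha := Aw_one_le h1 h2
  have hq : ∀ n, 0 ≤ (2 * z) ^ n := fun n => pow_nonneg (by linarith) _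
  cases σ with
  | S => exact absurd rfl hσ
  | O k p q ax =>
    have h0 := hup_nonneg h1 h2 (O k p q ax)
    have hA : 1 ≤ Aw z (p + q + 1) * Aw z k := by nlinarith [ha (p + q + 1), ha k]
    simp only [children, List.map_cons, List.map_nil, List.sum_cons, List.sum_nil, add_zero,
      gup_side]
    have h5 : gup (O (k + 1) p q ax) = 7 / 5 := rfl
    have h6 : gup (O k p q ax) = 7 / 5 := rfl
    rw [h5, h6]
    by_cases hp : p = 0 ∨ q = 0
    · have : 1 ≤ hup z (O k p q ax) := by
        have : 1 ≤ (2 * z) ^ p + (2 * z) ^ q := by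
          rcases hp with h | h <;> subst h
          · simpa using hq q
          · simpa using hq p
        simp only [hup]; nlinarith
      split_ifs <;> linarith
    · push Not at hp
      rw [if_neg hp.1, if_neg hp.2]; linarith
  | N f b k ax =>
    have h0 := hup_nonneg h1 h2 (N f b k ax)
    have hA : 1 ≤ Aw z (f + b + 1) * Aw z k := by nlinarith [ha (f + b + 1), ha k]
    simp only [children, List.map_cons, List.map_nil, List.sum_cons, List.sum_nil, add_zero,
      gup_fwd]
    have h5 : gup (O (k + 1) f b (!ax)) = 7 / 5 := rfl
    have h6 : gup (N f b k ax) = 1 := rfl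
    rw [h5, h6]
    split_ifs with h
    · have : 4 / 5 ≤ hup z (N f b k ax) := by
        subst h
        have : 4 / 5 ≤ (2 * z) ^ (0 + 1) + (1 - z) * (2 * z) ^ b := by
          have := mul_nonneg (by linarith : 0 ≤ 1 - z) (hq b)
          rw [zero_add, pow_one]; linarith
        simp only [hup]; nlinarith
      linarith
    · linarith

lemma R0_upper_aux (h1 : 2 / 5 < z) (h2 : z < 41 / 100)
    (h3 : 1 - 2 * z - 2 * z ^ 2 + 2 * z ^ 3 = 0) {η : ℝ} (hη : 0 < η)
    (n : ℕ) (σ : PSt) (hσ : σ ≠ S) :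
    η * (z ^ n * (R0 n σ : ℝ)) ≤ (1 + η) ^ n * (hup z σ + η * gup σ) := by
  induction n generalizing σ with
  | zero =>
    simp only [R0_zero]
    have := hup_nonneg h1 h2 σ
    have := gup_one_le σ
    simp
    nlinarith
  | succ n ih =>
    have hc : ∀ c ∈ children σ, c ≠ S := by
      cases σ with
      | S => exact absurd rfl hσ
      | O k p q ax =>
        intro c hc
        simp only [children, sideChild, List.mem_cons, List.not_mem_nil, or_false] at hc
        rcases hc with rfl | rfl | rfl
        · simp
        · split_ifs <;> simp
        · split_ifs <;> simp
      | N f b k ax =>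
        intro c hc
        simp only [children, fwdChild, List.mem_cons, List.not_mem_nil, or_false] at hc
        rcases hc with rfl | rfl
        · split_ifs <;> simp
        · simp
    rw [R0_succ]
    have e1 : η * (z ^ (n + 1) * ((((children σ).map fun c => R0 n c).sum : ℕ) : ℝ)) =
        z * ((children σ).map fun c => η * (z ^ n * (R0 n c : ℝ))).sum := by
      rw [List.sum_map_mul_left, List.sum_map_mul_left]
      push_cast
      rw [List.map_map]
      simp only [Function.comp_def]
      ring
    rw [e1]
    have e2 := list_sum_map_le (children σ) (fun c => η * (z ^ n * (R0 n c : ℝ)))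
      (fun c => (1 + η) ^ n * (hup z c + η * gup c)) (fun c hcc => ih c (hc c hcc))
    have e3 := hup_super h1 h2 h3 σ hσ
    have e4 := gup_super h1 h2 σ hσ
    have e5 := hup_nonneg h1 h2 σ
    have e6 := gup_one_le σ
    have hz : 0 ≤ z := by linarith
    calc _ ≤ z * ((children σ).map fun c => (1 + η) ^ n * (hup z c + η * gup c)).sum := by gcongr
      _ = (1 + η) ^ n * (z * ((children σ).map (hup z)).sum + η * (z * ((children σ).map gup).sum)) := by
        rw [List.sum_map_mul_left, List.sum_map_add, List.sum_map_mul_left]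
        ring
      _ ≤ (1 + η) ^ n * (hup z σ + η * (gup σ + hup z σ)) := by gcongr
      _ ≤ (1 + η) ^ n * ((1 + η) * (hup z σ + η * gup σ)) := by
        gcongr
        nlinarith [mul_nonneg hη.le (mul_nonneg hη.le (by linarith : 0 ≤ gup σ))]
      _ = _ := by ring

/-- Constant in the upper bound. -/
noncomputable def Cup (z : ℝ) : ℝ := 4 * Real.exp 1 * (Aw z 0 * Aw z 0 * 2 + 4)

lemma hup_le (h1 : 2 / 5 < z) (h2 : z < 41 / 100) (σ : PSt) : hup z σ ≤ Aw z 0 * Aw z 0 * 2 := by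
  have ha := Aw_one_le h1 h2
  have hb := Aw_le h1 h2
  have hr : ∀ n : ℕ, (2 * z) ^ n ≤ 1 := fun n => pow_le_one₀ (by linarith) (by linarith)
  have hq : ∀ n, 0 ≤ (2 * z) ^ n := fun n => pow_nonneg (by linarith) _
  have ha0 : ∀ n, 0 ≤ Aw z n := fun n => by linarith [ha n]
  have hz : 0 ≤ 1 - z := by linarith
  cases σ with
  | S => simp only [hup]; have := ha0 0; positivity
  | O k p q ax =>
    simp only [hup]
    have := ha0 0; have := hq p; have := hq q; have := ha0 k
    gcongr
    · exact hb _
    · exact hb _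
    · linarith [hr p, hr q]
  | N f b k ax =>
    simp only [hup]
    have := ha0 0; have := hq (f + 1); have := hq b; have := ha0 k
    gcongr
    · exact hb _
    · exact hb _
    · nlinarith [hr (f + 1), hr b]

lemma Cup_pos (h1 : 2 / 5 < z) (h2 : z < 41 / 100) : 0 < Cup z := by
  have := Aw_one_le h1 h2 0
  unfold Cup; positivity

lemma R0_upper' (h1 : 2 / 5 < z) (h2 : z < 41 / 100)
    (h3 : 1 - 2 * z - 2 * z ^ 2 + 2 * z ^ 3 = 0)
    (n : ℕ) (σ : PSt) (hσ : σ ≠ S) :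
    z ^ n * (R0 n σ : ℝ) ≤ Cup z / 4 * (n + 1) := by
  have hn : (0 : ℝ) < 1 / (n + 1) := by positivity
  have a := R0_upper_aux h1 h2 h3 hn n σ hσ
  have b : (1 + 1 / ((n : ℝ) + 1)) ^ n ≤ Real.exp 1 := by
    have : 1 + 1 / ((n : ℝ) + 1) ≤ Real.exp (1 / (n + 1)) := by
      linarith [Real.add_one_le_exp (1 / ((n : ℝ) + 1))]
    calc (1 + 1 / ((n : ℝ) + 1)) ^ n ≤ (Real.exp (1 / (n + 1))) ^ n := by gcongr
      _ = Real.exp (n * (1 / (n + 1))) := by rw [← Real.exp_nat_mul]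
      _ ≤ _ := by
        rw [Real.exp_le_exp, mul_one_div, div_le_one (by positivity)]; linarith
  have c := hup_le h1 h2 σ
  have d := gup_le σ
  have d1 := gup_one_le σ
  have e := hup_nonneg h1 h2 σ
  have f : hup z σ + 1 / ((n : ℝ) + 1) * gup σ ≤ Aw z 0 * Aw z 0 * 2 + 4 := by
    have : 1 / ((n : ℝ) + 1) * gup σ ≤ 1 * 4 := by
      gcongr
      rw [div_le_one (by positivity)]; linarith [(Nat.cast_nonneg n : (0:ℝ) ≤ n)]
    linarith
  have g : 1 / ((n : ℝ) + 1) * (z ^ n * (R0 n σ : ℝ)) ≤ Cup z / 4 := by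
    refine a.trans ?_
    unfold Cup
    have : Real.exp 1 * (Aw z 0 * Aw z 0 * 2 + 4) = 4 * Real.exp 1 * (Aw z 0 * Aw z 0 * 2 + 4) / 4 := by
      ring
    rw [← this]
    gcongr
  rw [one_div, inv_mul_le_iff₀ (by positivity)] at g
  linarith

lemma R0_upper (h1 : 2 / 5 < z) (h2 : z < 41 / 100)
    (h3 : 1 - 2 * z - 2 * z ^ 2 + 2 * z ^ 3 = 0)
    (n : ℕ) (σ : PSt) :
    z ^ n * (R0 n σ : ℝ) ≤ Cup z * (n + 1) := by
  have hC := Cup_pos h1 h2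
  by_cases hσ : σ = S
  · subst hσ
    cases n with
    | zero =>
      simp only [R0_zero]
      have := Aw_one_le h1 h2 0
      have := Real.add_one_le_exp 1
      unfold Cup
      simp
      nlinarith [mul_nonneg (by linarith : 0 ≤ Real.exp 1 - 1) (by positivity : 0 ≤ Aw z 0 * Aw z 0)]
    | succ n =>
      have a := R0_upper' h1 h2 h3 n (O 1 0 0 true) (by simp)
      have b := R0_upper' h1 h2 h3 n (O 1 0 0 false) (by simp)
      rw [R0_succ]
      simp only [children, List.map_cons, List.map_nil, List.sum_cons, List.sum_nil, add_zero]
      push_cast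
      have hz : z ≤ 1 := by linarith
      have : z ^ (n + 1) * ((R0 n (O 1 0 0 true) : ℝ) + (R0 n (O 1 0 0 true) +
        (R0 n (O 1 0 0 false) + R0 n (O 1 0 0 false)))) =
        z * (2 * (z ^ n * R0 n (O 1 0 0 true)) + 2 * (z ^ n * R0 n (O 1 0 0 false))) := by ring
      rw [this]
      have h0 : (0 : ℝ) ≤ Cup z * (n + 1) := by positivity
      calc _ ≤ z * (2 * (Cup z / 4 * (n + 1)) + 2 * (Cup z / 4 * (n + 1))) := by
            gcongr
        _ = z * (Cup z * (n + 1)) := by ring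
        _ ≤ 1 * (Cup z * (n + 1)) := by gcongr
        _ ≤ _ := by linarith
  · refine (R0_upper' h1 h2 h3 n σ hσ).trans ?_
    gcongr
    linarith
end

/-- restricted growth -/
lemma gup_restr (m : Bool) (σ : PSt) :
    ((children σ).map fun c => if forb m c then 0 else gup c).sum ≤ 243 / 100 * gup σ := by
  cases σ with
  | S => cases m <;> norm_num [children, forb, gup]
  | O k p q ax =>
    cases m <;> cases ax <;> by_cases hp : p = 0 <;> by_cases hq : q = 0 <;>
      norm_num [children, forb, gup, sideChild, hp, hq]
  | N f b k ax =>
    cases m <;> cases ax <;> by_cases hp : f = 0 <;>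
      norm_num [children, forb, gup, fwdChild, hp]

/-- The bad counting bound. -/
lemma R_restr (m : Bool) (n0 k : ℕ) (M : ℝ) (hM : ∀ σ, (R0 n0 σ : ℝ) ≤ M)
    (J : ℕ → Bool) (hJ : ∀ n, J n = true ↔ n0 ≤ n ∧ n < n0 + k) (j : ℕ) (σ : PSt) :
    (R m J (n0 + k + j) σ : ℝ) ≤ M * (243 / 100) ^ k * 4 * R0 j σ := by
  have hM0 : 0 ≤ M := le_trans (Nat.cast_nonneg _) (hM S)
  have a : ∀ n ≤ n0, ∀ σ, R m J n σ = R0 n σ := by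
    intro n
    induction n with
    | zero => intros; rfl
    | succ n ih =>
      intro hn σ
      rw [R0_succ, R]
      congr 1
      apply List.map_congr_left
      intro c _
      have : J n = false := by
        rw [← Bool.not_eq_true, hJ]; omega
      rw [this, ih (by omega)]; simp
  have b : ∀ i ≤ k, ∀ σ, (R m J (n0 + i) σ : ℝ) ≤ M * (243 / 100) ^ i * gup σ := by
    intro i
    induction i with
    | zero =>
      intro _ σ
      rw [add_zero, a _ le_rfl, pow_zero, mul_one]
      have := gup_one_le σ
      nlinarith [hM σ]
    | succ i ih =>
      intro hi σ
      rw [← add_assoc, R]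
      have hj : J (n0 + i) = true := by rw [hJ]; omega
      simp only [hj, Bool.true_and]
      push_cast
      rw [List.map_map]
      calc _ ≤ ((children σ).map fun c => M * (243 / 100) ^ i * (if forb m c then 0 else gup c)).sum := by
            apply list_sum_map_le
            intro c _
            simp only [Function.comp_apply]
            split_ifs with h
            · simp
            · exact ih (by omega) c
        _ = M * (243 / 100) ^ i * ((children σ).map fun c => (if forb m c then 0 else gup c)).sum := by
            rw [List.sum_map_mul_left]
        _ ≤ M * (243 / 100) ^ i * (243 / 100 * gup σ) := by
            gcongr
            exact gup_restr m σ
        _ = _ := by ring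
  induction j generalizing σ with
  | zero =>
    simp only [add_zero, R0_zero, Nat.cast_one, mul_one]
    refine (b k le_rfl σ).trans ?_
    gcongr
    exact gup_le σ
  | succ j ih =>
    rw [← add_assoc, R, R0_succ]
    have hj : J (n0 + k + j) = false := by rw [← Bool.not_eq_true, hJ]; omega
    simp only [hj, Bool.false_and]
    push_cast
    rw [List.map_map, List.map_map, ← List.sum_map_mul_left]
    apply list_sum_map_le
    intro c _
    simpa using ih c

end PSt
namespace PSt

/-- dot product -/
def dot (e v : ℤ × ℤ) : ℤ := e.1 * v.1 + e.2 * v.2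

lemma dot_add (e u v : ℤ × ℤ) : dot e (u + v) = dot e u + dot e v := by
  simp [dot]; ring
lemma dot_smul (e v : ℤ × ℤ) (k : ℤ) : dot e (k • v) = k * dot e v := by
  simp [dot]; ring
lemma dot_neg (e v : ℤ × ℤ) : dot (-e) v = - dot e v := by
  simp [dot]; ring
lemma dot_neg_right (e v : ℤ × ℤ) : dot e (-v) = - dot e v := by
  simp [dot]; ring

/-- An orthonormal frame of unit steps. -/
def Frame (e f : ℤ × ℤ) : Prop := IsStep e ∧ (f = (-e.2, e.1) ∨ f = (e.2, -e.1))

lemma Frame.swap {e f : ℤ × ℤ} (h : Frame e f) : Frame f e := by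
  obtain ⟨h1, h2⟩ := h
  rcases h1 with rfl | rfl | rfl | rfl <;> rcases h2 with rfl | rfl <;> simp [Frame, IsStep]

lemma Frame.neg_right {e f : ℤ × ℤ} (h : Frame e f) : Frame e (-f) := by
  obtain ⟨h1, h2⟩ := h
  rcases h1 with rfl | rfl | rfl | rfl <;> rcases h2 with rfl | rfl <;> simp [Frame, IsStep]

lemma Frame.neg_left {e f : ℤ × ℤ} (h : Frame e f) : Frame (-e) f := h.swap.neg_right.swap

lemma Frame.ee {e f : ℤ × ℤ} (h : Frame e f) : dot e e = 1 := by
  rcases h.1 with rfl | rfl | rfl | rfl <;> simp [dot]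
lemma Frame.ef {e f : ℤ × ℤ} (h : Frame e f) : dot e f = 0 := by
  obtain ⟨h1, h2⟩ := h
  rcases h1 with rfl | rfl | rfl | rfl <;> rcases h2 with rfl | rfl <;> simp [dot]
lemma Frame.fe {e f : ℤ × ℤ} (h : Frame e f) : dot f e = 0 := h.swap.ef
lemma Frame.ff {e f : ℤ × ℤ} (h : Frame e f) : dot f f = 1 := h.swap.ee

lemma Frame.eq_of {e f u v : ℤ × ℤ} (h : Frame e f) (h1 : dot e u = dot e v)
    (h2 : dot f u = dot f v) : u = v := by
  obtain ⟨a, b⟩ := h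
  rcases a with rfl | rfl | rfl | rfl <;> rcases b with rfl | rfl <;>
    (simp [dot] at h1 h2; ext <;> omega)

lemma Frame.step_iff {e f d : ℤ × ℤ} (h : Frame e f) :
    IsStep d ↔ d = e ∨ d = f ∨ d = -f ∨ d = -e := by
  obtain ⟨a, b⟩ := h
  rcases a with rfl | rfl | rfl | rfl <;> rcases b with rfl | rfl <;>
    (simp [IsStep]; tauto)

lemma Frame.nodup {e f : ℤ × ℤ} (h : Frame e f) : [e, f, -f].Nodup := by
  obtain ⟨a, b⟩ := h
  rcases a with rfl | rfl | rfl | rfl <;> rcases b with rfl | rfl <;> simp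

lemma Frame.axis {e f : ℤ × ℤ} (h : Frame e f) : f.1 = 0 ↔ ¬ e.1 = 0 := by
  obtain ⟨a, b⟩ := h
  rcases a with rfl | rfl | rfl | rfl <;> rcases b with rfl | rfl <;> simp

/-- The prudent step condition. -/
def Allowed (p : ℕ → ℤ × ℤ) (s : ℕ) (d : ℤ × ℤ) : Prop :=
  IsStep d ∧ ∀ k : ℕ, 1 ≤ k → ∀ j ≤ s, p s + (k : ℤ) • d ≠ p j

lemma allowed_iff {p : ℕ → ℤ × ℤ} {s : ℕ} {e f : ℤ × ℤ} (h : Frame e f) :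
    Allowed p s e ↔ ¬ ∃ j ≤ s, dot f (p j) = dot f (p s) ∧ dot e (p s) < dot e (p j) := by
  constructor
  · rintro ⟨_, h2⟩ ⟨j, hj, hf, he⟩
    refine h2 (dot e (p j) - dot e (p s)).toNat (by omega) j hj ?_
    apply h.eq_of
    · rw [dot_add, dot_smul, h.ee]; omega
    · rw [dot_add, dot_smul, h.fe]; omega
  · intro h2
    refine ⟨h.1, fun k hk j hj heq => h2 ⟨j, hj, ?_, ?_⟩⟩
    · rw [← heq, dot_add, dot_smul, h.fe]; omega
    · rw [← heq, dot_add, dot_smul, h.ee]; omega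

/-- Projection of the visited set on the direction `e`. -/
def Proj (p : ℕ → ℤ × ℤ) (s : ℕ) (e : ℤ × ℤ) (lo hi : ℕ) : Prop :=
  ∀ t : ℤ, (∃ i ≤ s, dot e (p i) = dot e (p s) + t) ↔ -(lo : ℤ) ≤ t ∧ t ≤ hi

lemma Proj.neg {p : ℕ → ℤ × ℤ} {s : ℕ} {e : ℤ × ℤ} {lo hi : ℕ} (h : Proj p s e lo hi) :
    Proj p s (-e) hi lo := by
  intro t
  have := h (-t)
  simp only [dot_neg]
  constructor
  · rintro ⟨i, hi, h2⟩
    have := this.1 ⟨i, hi, by omega⟩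
    omega
  · intro h2
    obtain ⟨i, hi, h3⟩ := this.2 (by omega)
    exact ⟨i, hi, by omega⟩

lemma Proj.bd {p : ℕ → ℤ × ℤ} {s : ℕ} {e : ℤ × ℤ} {lo hi : ℕ} (h : Proj p s e lo hi)
    {i : ℕ} (hi' : i ≤ s) : dot e (p i) ≤ dot e (p s) + hi := by
  have := (h (dot e (p i) - dot e (p s))).1 ⟨i, hi', by omega⟩
  omega

/-- Extension of a path. -/
def ext (p : ℕ → ℤ × ℤ) (s : ℕ) (d : ℤ × ℤ) : ℕ → ℤ × ℤ := Function.update p (s + 1) (p s + d)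

lemma ext_le {p : ℕ → ℤ × ℤ} {s : ℕ} {d : ℤ × ℤ} {i : ℕ} (h : i ≤ s) : ext p s d i = p i := by
  unfold ext; rw [Function.update_of_ne (by omega)]

lemma ext_succ {p : ℕ → ℤ × ℤ} {s : ℕ} {d : ℤ × ℤ} : ext p s d (s + 1) = p s + d := by
  unfold ext; simp

/-- Invariant, outward state -/
def InvO (p : ℕ → ℤ × ℤ) (s k a b : ℕ) (ax : Bool) (e f : ℤ × ℤ) : Prop :=
  Frame e f ∧ (ax = true ↔ e.1 = 0) ∧ Proj p s e k 0 ∧ Proj p s f b a ∧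
  (∀ i ≤ s, dot e (p i) = dot e (p s) → dot f (p i) = dot f (p s)) ∧
  (∃ i ≤ s, dot f (p i) = dot f (p s) ∧ dot e (p i) < dot e (p s))

/-- Invariant, non outward state -/
def InvN (p : ℕ → ℤ × ℤ) (s f b k : ℕ) (ax : Bool) (e g : ℤ × ℤ) : Prop :=
  Frame e g ∧ (ax = true ↔ e.1 = 0) ∧ Proj p s e b f ∧ Proj p s g k 0 ∧
  (∀ i ≤ s, dot g (p i) = dot g (p s) → dot e (p i) ≤ dot e (p s)) ∧
  (∃ i ≤ s, dot e (p i) = dot e (p s) ∧ dot g (p i) < dot g (p s)) ∧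
  (∃ i ≤ s, dot g (p i) = dot g (p s) ∧ dot e (p i) < dot e (p s))

/-- The state describes the path. -/
def Inv (p : ℕ → ℤ × ℤ) (s : ℕ) : PSt → Prop
  | S => s = 0
  | O k a b ax => ∃ e f, InvO p s k a b ax e f
  | N f b k ax => ∃ e g, InvN p s f b k ax e g

/-- Projection after a step. -/
lemma Proj.ext_fwd {p : ℕ → ℤ × ℤ} {s : ℕ} {e d : ℤ × ℤ} {lo hi : ℕ} (h : Proj p s e lo hi)
    (hd : dot e d = 1) : Proj (ext p s d) (s + 1) e (lo + 1) (hi - 1) := by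
  intro t
  rw [ext_succ, dot_add, hd]
  constructor
  · rintro ⟨i, hi', h2⟩
    rcases Nat.lt_or_ge s i with h3 | h3
    · obtain rfl : i = s + 1 := by omega
      rw [ext_succ, dot_add, hd] at h2
      omega
    · rw [ext_le h3] at h2
      have := (h (t + 1)).1 ⟨i, h3, by omega⟩
      omega
  · intro h2
    by_cases h3 : t + 1 ≤ hi
    · obtain ⟨i, hi', h4⟩ := (h (t + 1)).2 (by omega)
      exact ⟨i, by omega, by rw [ext_le hi']; omega⟩
    · refine ⟨s + 1, le_rfl, ?_⟩
      rw [ext_succ, dot_add, hd]; omega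

lemma Proj.ext_perp {p : ℕ → ℤ × ℤ} {s : ℕ} {e d : ℤ × ℤ} {lo hi : ℕ} (h : Proj p s e lo hi)
    (hd : dot e d = 0) : Proj (ext p s d) (s + 1) e lo hi := by
  intro t
  rw [ext_succ, dot_add, hd]
  constructor
  · rintro ⟨i, hi', h2⟩
    rcases Nat.lt_or_ge s i with h3 | h3
    · obtain rfl : i = s + 1 := by omega
      rw [ext_succ, dot_add, hd] at h2
      omega
    · rw [ext_le h3] at h2
      have := (h t).1 ⟨i, h3, by omega⟩
      omega
  · intro h2
    obtain ⟨i, hi', h4⟩ := (h t).2 (by omega)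
    exact ⟨i, by omega, by rw [ext_le hi']; omega⟩

lemma InvO.symm {p : ℕ → ℤ × ℤ} {s k a b : ℕ} {ax : Bool} {e f : ℤ × ℤ}
    (h : InvO p s k a b ax e f) : InvO p s k b a ax e (-f) := by
  obtain ⟨h1, h2, h3, h4, h5, h6⟩ := h
  refine ⟨h1.neg_right, h2, h3, h4.neg, ?_, ?_⟩
  · intro i hi he
    rw [dot_neg, dot_neg, h5 i hi he]
  · simpa only [dot_neg, neg_inj] using h6

/-- Generic construction of an outward state after an expanding step. -/
lemma mkO {p : ℕ → ℤ × ℤ} {s k a b : ℕ} {ax : Bool} {e f : ℤ × ℤ} (hF : Frame e f)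
    (hax : ax = true ↔ e.1 = 0) (h1 : Proj p s e k 0) (h2 : Proj p s f b a) :
    InvO (ext p s e) (s + 1) (k + 1) a b ax e f := by
  refine ⟨hF, hax, h1.ext_fwd hF.ee, h2.ext_perp hF.fe, ?_, ?_⟩
  · intro i hi he
    rcases Nat.lt_or_ge s i with h3 | h3
    · obtain rfl : i = s + 1 := by omega
      rfl
    · rw [ext_le h3, ext_succ, dot_add, hF.ee] at he
      have := h1.bd h3
      simp at this
      omega
  · refine ⟨s, by omega, ?_, ?_⟩
    · rw [ext_le le_rfl, ext_succ, dot_add, hF.fe]; omega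
    · rw [ext_le le_rfl, ext_succ, dot_add, hF.ee]; omega

/-- Generic construction of a non outward state after a non expanding step. -/
lemma mkN {p : ℕ → ℤ × ℤ} {s k a b : ℕ} {ax : Bool} {e g : ℤ × ℤ} (hF : Frame e g)
    (hax : ax = true ↔ e.1 = 0) (h1 : Proj p s e b (a + 1)) (h2 : Proj p s g k 0)
    (h3 : ∀ i ≤ s, dot g (p i) = dot g (p s) → dot e (p i) ≤ dot e (p s)) :
    InvN (ext p s e) (s + 1) a (b + 1) k ax e g := by
  refine ⟨hF, hax, h1.ext_fwd hF.ee, h2.ext_perp hF.fe, ?_, ?_, ?_⟩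
  · intro i hi he
    rcases Nat.lt_or_ge s i with h4 | h4
    · obtain rfl : i = s + 1 := by omega
      rfl
    · rw [ext_le h4, ext_succ, dot_add, hF.fe, add_zero] at he
      have := h3 i h4 he
      rw [ext_le h4, ext_succ, dot_add, hF.ee]; omega
  · obtain ⟨i, hi, h4⟩ := (h1 1).2 (by push_cast; omega)
    refine ⟨i, by omega, ?_, ?_⟩
    · rw [ext_le hi, ext_succ, dot_add, hF.ee]; omega
    · rw [ext_le hi, ext_succ, dot_add, hF.fe, add_zero]
      have h5 := h2.bd hi
      simp at h5
      by_contra h6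
      have := h3 i hi (by omega)
      omega
  · refine ⟨s, by omega, ?_, ?_⟩
    · rw [ext_le le_rfl, ext_succ, dot_add, hF.fe]; omega
    · rw [ext_le le_rfl, ext_succ, dot_add, hF.ee]; omega

lemma InvO.side {p : ℕ → ℤ × ℤ} {s k a b : ℕ} {ax : Bool} {e f : ℤ × ℤ}
    (h : InvO p s k a b ax e f) : Inv (ext p s f) (s + 1) (sideChild k a b ax) := by
  obtain ⟨h1, h2, h3, h4, h5, h6⟩ := h
  have hax : (!ax) = true ↔ f.1 = 0 := by
    rw [h1.axis, ← h2]; simp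
  unfold sideChild
  split_ifs with h
  · subst h
    exact ⟨f, e, mkO h1.swap hax h4 h3⟩
  · obtain ⟨a, rfl⟩ := Nat.exists_eq_succ_of_ne_zero h
    exact ⟨f, e, mkN h1.swap hax h4 h3 fun i hi he => (h5 i hi he).le⟩

lemma children_spec {p : ℕ → ℤ × ℤ} {s : ℕ} {σ : PSt} (h : Inv p s σ) :
    ∃ es : List (ℤ × ℤ), es.Nodup ∧
      List.Forall₂ (fun d c => Inv (ext p s d) (s + 1) c) es (children σ) ∧
      ∀ d, Allowed p s d ↔ d ∈ es := by
  cases σ with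
  | S =>
    obtain rfl : s = 0 := h
    have hP : ∀ e, Proj p 0 e 0 0 := by
      intro e t
      constructor
      · rintro ⟨i, hi, h2⟩
        obtain rfl : i = 0 := by omega
        simp at h2 ⊢; omega
      · intro h2
        exact ⟨0, le_rfl, by simp at h2 ⊢; omega⟩
    have hS : ∀ e ax, IsStep e → (ax = true ↔ e.1 = 0) → Inv (ext p 0 e) (0 + 1) (O 1 0 0 ax) :=
      fun e ax he hax => ⟨e, (-e.2, e.1), mkO ⟨he, Or.inl rfl⟩ hax (hP _) (hP _)⟩
    refine ⟨[(0, 1), (0, -1), (1, 0), (-1, 0)], by decide, ?_, ?_⟩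
    · simp only [children]
      refine .cons (hS _ _ ?_ ?_) (.cons (hS _ _ ?_ ?_) (.cons (hS _ _ ?_ ?_)
        (.cons (hS _ _ ?_ ?_) .nil))) <;> simp [IsStep]
    · intro d
      have : Allowed p 0 d ↔ IsStep d := by
        constructor
        · exact fun h => h.1
        · intro h
          rw [allowed_iff (f := (-d.2, d.1)) ⟨h, Or.inl rfl⟩]
          rintro ⟨j, hj, _, h2⟩
          obtain rfl : j = 0 := by omega
          omega
      rw [this]
      simp [IsStep]; tauto
  | O k a b ax =>
    obtain ⟨e, f, h⟩ := h
    have hs := h.side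
    have hs' := h.symm.side
    obtain ⟨h1, h2, h3, h4, h5, h6⟩ := h
    refine ⟨[e, f, -f], h1.nodup, ?_, ?_⟩
    · exact .cons ⟨e, f, mkO h1 h2 h3 h4⟩ (.cons hs (.cons hs' .nil))
    · intro d
      have a1 : Allowed p s e := by
        rw [allowed_iff h1]
        rintro ⟨j, hj, _, hh⟩
        have := h3.bd hj
        simp at this; omega
      have a2 : Allowed p s f := by
        rw [allowed_iff h1.swap]
        rintro ⟨j, hj, hh, hh'⟩
        have := h5 j hj hh
        omega
      have a3 : Allowed p s (-f) := by
        rw [allowed_iff h1.neg_right.swap]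
        rintro ⟨j, hj, hh, hh'⟩
        have := h5 j hj hh
        rw [dot_neg, dot_neg] at hh'
        omega
      have a4 : ¬ Allowed p s (-e) := by
        rw [allowed_iff h1.neg_left, not_not]
        simpa only [dot_neg, neg_lt_neg_iff] using h6
      constructor
      · intro h
        rcases (h1.step_iff.1 h.1) with rfl | rfl | rfl | rfl <;> simp
        exact absurd h a4
      · simp only [List.mem_cons, List.not_mem_nil, or_false]
        rintro (rfl | rfl | rfl) <;> assumption
  | N f b k ax =>
    obtain ⟨e, g, h1, h2, h3, h4, h5, h6, h7⟩ := h
    have hax : (!ax) = true ↔ g.1 = 0 := by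
      rw [h1.axis, ← h2]; simp
    have hnd := h1.nodup
    refine ⟨[e, g], ?_, .cons ?_ (.cons ⟨g, e, mkO h1.swap hax h4 h3⟩ .nil), ?_⟩
    · simp only [List.nodup_cons, List.mem_cons, not_or] at hnd ⊢
      simp [hnd.1.1]
    · unfold fwdChild
      split_ifs with h
      · subst h
        exact ⟨e, g, mkO h1 h2 h3 h4⟩
      · obtain ⟨f, rfl⟩ := Nat.exists_eq_succ_of_ne_zero h
        exact ⟨e, g, mkN h1 h2 h3 h4 h5⟩
    · intro d
      have a1 : Allowed p s e := by
        rw [allowed_iff h1]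
        rintro ⟨j, hj, hh', hh⟩
        have := h5 j hj hh'
        omega
      have a2 : Allowed p s g := by
        rw [allowed_iff h1.swap]
        rintro ⟨j, hj, hh, hh'⟩
        have := h4.bd hj
        simp at this; omega
      have a3 : ¬ Allowed p s (-g) := by
        rw [allowed_iff h1.neg_right.swap, not_not]
        simpa only [dot_neg, neg_lt_neg_iff] using h6
      have a4 : ¬ Allowed p s (-e) := by
        rw [allowed_iff h1.neg_left, not_not]
        simpa only [dot_neg, neg_lt_neg_iff] using h7
      constructor
      · intro h
        rcases (h1.step_iff.1 h.1) with rfl | rfl | rfl | rfl <;> simp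
        · exact absurd h a3
        · exact absurd h a4
      · simp only [List.mem_cons, List.not_mem_nil, or_false]
        rintro (rfl | rfl) <;> assumption

/-- coordinate along an axis -/
def coord (m : Bool) (v : ℤ × ℤ) : ℤ := if m then v.2 else v.1

lemma forb_spec {p : ℕ → ℤ × ℤ} {s : ℕ} {d : ℤ × ℤ} {c : PSt} {m : Bool}
    (hA : Allowed p s d) (h : Inv (ext p s d) (s + 1) c) (hf : forb m c = true) :
    ¬ ∃ i ≤ s, coord m (p i) = coord m (p s + d) := by
  cases c with
  | S => simp [forb] at hf
  | N f b k ax => simp [forb] at hf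
  | O k a b ax =>
    obtain rfl : ax = m := by simpa [forb] using hf
    obtain ⟨e, f, h1, h2, h3, h4, h5, h6⟩ := h
    rintro ⟨i, hi, hc⟩
    have he : dot e (p i) = dot e (p s + d) := by
      unfold coord at hc
      rcases h1.1 with rfl | rfl | rfl | rfl <;> cases ax <;> simp_all [dot]
    have := h5 i (by omega) (by rw [ext_le hi, ext_succ]; exact he)
    rw [ext_le hi, ext_succ] at this
    refine hA.2 1 le_rfl i hi ?_
    simpa using (h1.eq_of he this).symm

/-- Prudent paths indexed by naturals. -/
def PN (L : ℕ) (q : ℕ → ℤ × ℤ) : Prop := q 0 = 0 ∧ ∀ s < L, Allowed q s (q (s + 1) - q s)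

/-- Set of prudent paths extending `p`. -/
def Y (m : Bool) (J : ℕ → Bool) (L s : ℕ) (p : ℕ → ℤ × ℤ) : Set (ℕ → ℤ × ℤ) :=
  {q | PN L q ∧ (∀ i, L ≤ i → q i = q L) ∧ (∀ i ≤ s, q i = p i) ∧
    ∀ t < L, s ≤ t → J (L - 1 - t) = true → ∃ i ≤ t, coord m (q i) = coord m (q (t + 1))}

lemma Allowed.congr {p q : ℕ → ℤ × ℤ} {s : ℕ} {d : ℤ × ℤ} (h : ∀ i ≤ s, q i = p i)
    (hA : Allowed q s d) : Allowed p s d := by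
  refine ⟨hA.1, fun k hk j hj => ?_⟩
  rw [← h j hj, ← h s le_rfl]
  exact hA.2 k hk j hj

lemma encard_list_le {α β γ : Type*} (Z : α → Set β) (F : γ → ℕ) (es : List α) (cs : List γ)
    (h : List.Forall₂ (fun d c => (Z d).encard ≤ (F c : ℕ∞)) es cs) :
    (⋃ d ∈ es, Z d).encard ≤ ((cs.map F).sum : ℕ) := by
  induction h with
  | nil => simp
  | @cons a c l₁ l₂ h1 h2 ih =>
    have : (⋃ d ∈ a :: l₁, Z d) = Z a ∪ ⋃ d ∈ l₁, Z d := by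
      ext x; simp
    rw [this, List.map_cons, List.sum_cons, Nat.cast_add]
    exact (Set.encard_union_le _ _).trans (add_le_add h1 ih)

lemma encard_list_ge {α β γ : Type*} (Z : α → Set β) (F : γ → ℕ) (es : List α) (cs : List γ)
    (hn : es.Nodup) (hd : ∀ a b x, x ∈ Z a → x ∈ Z b → a = b)
    (h : List.Forall₂ (fun d c => (F c : ℕ∞) ≤ (Z d).encard) es cs) :
    (((cs.map F).sum : ℕ) : ℕ∞) ≤ (⋃ d ∈ es, Z d).encard := by
  induction h with
  | nil => simp
  | @cons a c l₁ l₂ h1 h2 ih =>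
    have : (⋃ d ∈ a :: l₁, Z d) = Z a ∪ ⋃ d ∈ l₁, Z d := by
      ext x; simp
    rw [List.nodup_cons] at hn
    rw [this, List.map_cons, List.sum_cons, Nat.cast_add, Set.encard_union_eq]
    · exact add_le_add h1 (ih hn.2)
    · rw [Set.disjoint_left]
      intro x hx hx'
      simp only [Set.mem_iUnion] at hx'
      obtain ⟨b, hb, hxb⟩ := hx'
      exact hn.1 (hd a b x hx hxb ▸ hb)

lemma Y_upper (m : Bool) (J : ℕ → Bool) (L n s : ℕ) (p : ℕ → ℤ × ℤ) (σ : PSt) (hL : s + n = L)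
    (hI : Inv p s σ) : (Y m J L s p).encard ≤ (R m J n σ : ℕ∞) := by
  induction n generalizing s p σ with
  | zero =>
    obtain rfl : s = L := by omega
    simp only [R, Nat.cast_one]
    rw [Set.encard_le_one_iff]
    intro a b ha hb
    funext i
    rcases le_total i s with h | h
    · rw [ha.2.2.1 i h, hb.2.2.1 i h]
    · rw [ha.2.1 i h, hb.2.1 i h, ha.2.2.1 s le_rfl, hb.2.2.1 s le_rfl]
  | succ n ih =>
    obtain ⟨es, hnd, hF, hes⟩ := children_spec hI
    have hsub : Y m J L s p ⊆ ⋃ d ∈ es, (Y m J L s p ∩ {q | q (s + 1) = p s + d}) := by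
      intro q hq
      have hA := hq.1.2 s (by omega)
      have hA' := hA.congr hq.2.2.1
      rw [hes] at hA'
      simp only [Set.mem_iUnion]
      refine ⟨_, hA', hq, ?_⟩
      have := hq.2.2.1 s le_rfl
      simp [← this]
    refine (Set.encard_le_encard hsub).trans ?_
    rw [R]
    apply encard_list_le
    have hF' : List.Forall₂ (fun d c => Inv (ext p s d) (s + 1) c ∧ Allowed p s d) es (children σ) := by
      rw [List.forall₂_iff_get] at hF ⊢
      refine ⟨hF.1, fun i h1 h2 => ⟨hF.2 i h1 h2, ?_⟩⟩
      rw [hes]; exact List.get_mem _ _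
    refine hF'.imp ?_
    rintro d c ⟨hI', hA⟩
    split_ifs with hcond
    · simp only [Bool.and_eq_true] at hcond
      have hno := forb_spec hA hI' hcond.2
      have : Y m J L s p ∩ {q | q (s + 1) = p s + d} = ∅ := by
        rw [Set.eq_empty_iff_forall_notMem]
        rintro q ⟨hq, hq1⟩
        apply hno
        obtain ⟨i, hi, h⟩ := hq.2.2.2 s (by omega) le_rfl (by
          rw [show L - 1 - s = n by omega]; exact hcond.1)
        refine ⟨i, hi, ?_⟩
        rw [hq1, hq.2.2.1 i hi] at h
        exact h
      rw [this]; simp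
    · refine (Set.encard_le_encard ?_).trans (ih (s + 1) (ext p s d) c (by omega) hI')
      rintro q ⟨hq, hq1⟩
      refine ⟨hq.1, hq.2.1, ?_, fun t ht hst => hq.2.2.2 t ht (by omega)⟩
      intro i hi
      rcases Nat.lt_or_ge s i with h3 | h3
      · obtain rfl : i = s + 1 := by omega
        rw [ext_succ]; exact hq1
      · rw [ext_le h3]; exact hq.2.2.1 i h3

lemma Y_lower (m : Bool) (L n s : ℕ) (p : ℕ → ℤ × ℤ) (σ : PSt) (hL : s + n = L) (hP : PN s p)
    (hI : Inv p s σ) : (R0 n σ : ℕ∞) ≤ (Y m (fun _ => false) L s p).encard := by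
  induction n generalizing s p σ with
  | zero =>
    obtain rfl : s = L := by omega
    rw [R0_zero, Nat.cast_one, Set.one_le_encard_iff_nonempty]
    refine ⟨fun i => p (min i s), ⟨?_, ?_⟩, ?_, ?_, ?_⟩
    · simpa using hP.1
    · intro t ht
      simp only [min_eq_left ht.le, min_eq_left (by omega : t + 1 ≤ s)]
      refine Allowed.congr (q := p) (fun i hi => ?_) ?_
      · rw [min_eq_left (by omega)]
      · exact hP.2 t ht
    · intro i hi; simp [hi]
    · intro i hi; simp [hi]
    · simp
  | succ n ih =>
    obtain ⟨es, hnd, hF, hes⟩ := children_spec hI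
    have hsub : (⋃ d ∈ es, (Y m (fun _ => false) L s p ∩ {q | q (s + 1) = p s + d})) ⊆
        Y m (fun _ => false) L s p := by
      intro q hq
      simp only [Set.mem_iUnion] at hq
      obtain ⟨_, _, h⟩ := hq
      exact h.1
    refine le_trans ?_ (Set.encard_le_encard hsub)
    rw [R0_succ]
    refine encard_list_ge _ _ _ _ hnd ?_ ?_
    · rintro a b x ⟨_, h1⟩ ⟨_, h2⟩
      simp only [Set.mem_ofPred_eq] at h1 h2
      rw [h1] at h2
      exact add_left_cancel h2
    have hF' : List.Forall₂ (fun d c => Inv (ext p s d) (s + 1) c ∧ Allowed p s d) es (children σ) := by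
      rw [List.forall₂_iff_get] at hF ⊢
      refine ⟨hF.1, fun i h1 h2 => ⟨hF.2 i h1 h2, ?_⟩⟩
      rw [hes]; exact List.get_mem _ _
    refine hF'.imp ?_
    rintro d c ⟨hI', hA⟩
    refine (ih (s + 1) (ext p s d) c (by omega) ?_ hI').trans (Set.encard_le_encard ?_)
    · refine ⟨by rw [ext_le (by omega)]; exact hP.1, fun t ht => ?_⟩
      refine Allowed.congr (q := p) (fun i hi => (ext_le (by omega)).symm) ?_
      rcases Nat.lt_or_ge t s with h3 | h3
      · rw [ext_le (by omega), ext_le (by omega)]; exact hP.2 t h3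
      · obtain rfl : t = s := by omega
        rw [ext_succ, ext_le le_rfl]; simpa using hA
    · rintro q ⟨hq1, hq2, hq3, hq4⟩
      refine ⟨⟨hq1, hq2, ?_, by simp⟩, ?_⟩
      · intro i hi
        rw [hq3 i (by omega), ext_le hi]
      · have := hq3 (s + 1) le_rfl
        rw [ext_succ] at this
        exact this

end PSt
namespace PSt

/-- Extension of a finite path to the naturals. -/
def ev (L : ℕ) (π : Fin (L + 1) → ℤ × ℤ) (i : ℕ) : ℤ × ℤ := π ⟨min i L, by omega⟩

lemma ev_fin (L : ℕ) (π : Fin (L + 1) → ℤ × ℤ) (i : Fin (L + 1)) : ev L π i = π i := by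
  unfold ev
  congr 1
  ext
  simp
  omega

lemma ev_inj (L : ℕ) : Function.Injective (ev L) := by
  intro a b h
  funext i
  rw [← ev_fin L a i, h, ev_fin]

lemma prudent_iff (L : ℕ) (π : Fin (L + 1) → ℤ × ℤ) : π ∈ prudentSet L ↔ PN L (ev L π) := by
  unfold prudentSet PN Allowed
  rw [Set.mem_ofPred_eq]
  have h0 : ev L π 0 = π 0 := ev_fin L π 0
  have h1 : ∀ i : Fin L, π i.castSucc = ev L π i := fun i => by
    rw [← ev_fin L π]; simp
  have h2 : ∀ i : Fin L, π i.succ = ev L π (i + 1) := fun i => by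
    rw [← ev_fin L π]; simp
  rw [h0]
  refine and_congr Iff.rfl ⟨?_, ?_⟩
  · intro h s hs
    have := h ⟨s, hs⟩
    rw [h1, h2] at this
    refine ⟨this.1, fun k hk j hj => ?_⟩
    have h3 := this.2 k hk ⟨j, by omega⟩ (by rw [Fin.le_def]; simpa using hj)
    rw [← ev_fin L π] at h3
    exact h3
  · intro h i
    rw [h1, h2]
    have := h i i.2
    refine ⟨this.1, fun k hk j hj => ?_⟩
    rw [← ev_fin L π j]
    exact this.2 k hk j (by rw [Fin.le_def] at hj; simpa using hj)

lemma card_upper (m : Bool) (J : ℕ → Bool) (L : ℕ) (B : Set (Fin (L + 1) → ℤ × ℤ))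
    (hB : B ⊆ prudentSet L)
    (hJ : ∀ π ∈ B, ∀ t < L, J (L - 1 - t) = true →
      ∃ i ≤ t, coord m (ev L π i) = coord m (ev L π (t + 1))) :
    B.encard ≤ (R m J L S : ℕ∞) := by
  rw [← (ev_inj L).encard_image]
  refine (Set.encard_le_encard ?_).trans
    (Y_upper m J L L 0 (fun _ => 0) S (by omega) (show Inv _ 0 S from rfl))
  rintro _ ⟨π, hπ, rfl⟩
  have hp := (prudent_iff L π).1 (hB hπ)
  refine ⟨hp, ?_, ?_, fun t ht _ h => hJ π hπ t ht h⟩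
  · intro i hi; unfold ev; simp [hi]
  · intro i hi
    obtain rfl : i = 0 := by omega
    exact hp.1

lemma card_lower (L : ℕ) : (R0 L S : ℕ∞) ≤ (prudentSet L).encard := by
  refine (Y_lower true L L 0 (fun _ => 0) S (by omega) ⟨rfl, by simp⟩
    (show Inv _ 0 S from rfl)).trans ?_
  rw [← (ev_inj L).encard_image (prudentSet L)]
  apply Set.encard_le_encard
  rintro q ⟨hq1, hq2, hq3, _⟩
  have he : ev L (fun i => q i) = q := by
    funext i
    unfold ev
    simp only
    rcases le_total i L with h | h
    · rw [min_eq_left h]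
    · rw [min_eq_right h, hq2 i h]
  exact ⟨fun i => q i, by rw [prudent_iff, he]; exact hq1, he⟩

/-- Size of the range along an axis. -/
def cnt (q : ℕ → ℤ × ℤ) (m : Bool) (t : ℕ) : ℕ :=
  ((Finset.range (t + 1)).image (fun i => coord m (q i))).card

lemma cnt_mono (q : ℕ → ℤ × ℤ) (m : Bool) : Monotone (cnt q m) := by
  intro a b h
  apply Finset.card_le_card
  apply Finset.image_subset_image
  apply Finset.range_mono
  omega

lemma cnt_pos (q : ℕ → ℤ × ℤ) (m : Bool) (t : ℕ) : 1 ≤ cnt q m t := by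
  unfold cnt
  rw [Nat.succ_le_iff, Finset.card_pos]
  simp

lemma cnt_eq_of_exists {q : ℕ → ℤ × ℤ} {m : Bool} {t : ℕ}
    (h : ∃ i ≤ t, coord m (q i) = coord m (q (t + 1))) : cnt q m (t + 1) = cnt q m t := by
  obtain ⟨i, hi, h⟩ := h
  unfold cnt
  rw [Finset.range_add_one (n := t + 1), Finset.image_insert, Finset.insert_eq_of_mem]
  rw [← h]
  exact Finset.mem_image_of_mem (fun i => coord m (q i)) (by simp; omega)

lemma exists_of_cnt_eq {q : ℕ → ℤ × ℤ} {m : Bool} {t : ℕ}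
    (h : cnt q m (t + 1) = cnt q m t) : ∃ i ≤ t, coord m (q i) = coord m (q (t + 1)) := by
  by_contra hc
  unfold cnt at h
  rw [Finset.range_add_one (n := t + 1), Finset.image_insert, Finset.card_insert_of_notMem] at h
  · omega
  · intro h2
    rw [Finset.mem_image] at h2
    obtain ⟨i, hi, h3⟩ := h2
    exact hc ⟨i, by simp at hi; omega, h3⟩

lemma image_Iic (L : ℕ) (π : Fin (L + 1) → ℤ × ℤ) (m : Bool) (t : ℕ) :
    (Finset.Iic (⟨min t L, by omega⟩ : Fin (L + 1))).image (fun i => coord m (π i)) =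
    (Finset.range (t + 1)).image (fun i => coord m (ev L π i)) := by
  ext x
  simp only [Finset.mem_image, Finset.mem_Iic, Finset.mem_range, Fin.le_def]
  constructor
  · rintro ⟨i, hi, h⟩
    exact ⟨i, by omega, by rw [ev_fin]; exact h⟩
  · rintro ⟨i, hi, h⟩
    exact ⟨⟨min i L, by omega⟩, by simp; omega, h⟩

lemma heightAt_eq (L : ℕ) (π : Fin (L + 1) → ℤ × ℤ) : heightAt L π = cnt (ev L π) true := by
  funext t
  unfold heightAt cnt
  rw [← image_Iic]
  simp [coord]

lemma widthAt_eq (L : ℕ) (π : Fin (L + 1) → ℤ × ℤ) : widthAt L π = cnt (ev L π) false := by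
  funext t
  unfold widthAt cnt
  rw [← image_Iic]
  simp [coord]

/-- axis of the excursion -/
def axis (i : ℕ) : Bool := decide (Even i)

lemma axis_succ (i : ℕ) : axis (i + 1) = !axis i := by
  unfold axis
  by_cases h : Even i <;> simp [h, Nat.even_add_one]

lemma excTime_succ (L : ℕ) (π : Fin (L + 1) → ℤ × ℤ) (i : ℕ) :
    excTime L π (i + 1) =
      (excTime L π i).bind fun a => nextTime L (cnt (ev L π) (axis i)) a := by
  rw [excTime]
  congr 1
  funext a
  unfold axis
  by_cases h : Even i <;> simp [h, heightAt_eq, widthAt_eq]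

lemma const_of {f : ℕ → ℕ} (a b : ℕ) (hab : a ≤ b)
    (h : ∀ t, a < t → t ≤ b → ¬ f (t - 1) < f t) : f b ≤ f a := by
  induction b, hab using Nat.le_induction with
  | base => exact le_rfl
  | succ b hb ih =>
    have := h (b + 1) (by omega) le_rfl
    simp at this
    exact this.trans (ih fun t h1 h2 => h t h1 (by omega))

lemma nextTime_some {L : ℕ} {f : ℕ → ℕ} {a b : ℕ} (h : nextTime L f a = some b) :
    a ≤ b ∧ b < L ∧ f b < f (b + 1) ∧ f b ≤ f a := by
  classical
  unfold nextTime at h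
  split_ifs at h with hex
  have hs := Nat.find_spec hex
  have hm := fun t => @Nat.find_min _ _ hex t
  set T := Nat.find hex
  obtain rfl : T - 1 = b := by simpa using h
  have e : T - 1 + 1 = T := by omega
  rw [e]
  refine ⟨by omega, by omega, hs.2.2, ?_⟩
  apply const_of _ _ (by omega)
  intro t h1 h2 h3
  exact hm t (by omega) ⟨h1, by omega, h3⟩

lemma nextTime_none {L : ℕ} {f : ℕ → ℕ} {a : ℕ} (h : nextTime L f a = none) (ha : a ≤ L) :
    f L ≤ f a := by
  classical
  unfold nextTime at h
  split_ifs at h with hex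
  apply const_of _ _ ha
  intro t h1 h2 h3
  exact hex ⟨t, h1, h2, h3⟩

lemma step_other {L : ℕ} {q : ℕ → ℤ × ℤ} (hq : PN L q) {m : Bool} {b : ℕ} (hb : b < L)
    (h : cnt q m b < cnt q m (b + 1)) : cnt q (!m) (b + 1) = cnt q (!m) b := by
  apply cnt_eq_of_exists
  refine ⟨b, le_rfl, ?_⟩
  have h1 : coord m (q b) ≠ coord m (q (b + 1)) := fun he => by
    have := cnt_eq_of_exists ⟨b, le_rfl, he⟩
    omega
  have hs := (hq.2 b hb).1
  unfold IsStep at hs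
  simp only [Prod.ext_iff, Prod.fst_sub, Prod.snd_sub] at hs
  cases m <;> simp [coord] at h1 ⊢ <;> omega

lemma sizes {L : ℕ} {π : Fin (L + 1) → ℤ × ℤ} (hπ : PN L (ev L π)) (i : ℕ) :
    ∀ b, excTime L π (i + 1) = some b →
      b < L ∧ cnt (ev L π) (axis i) b < cnt (ev L π) (axis i) (b + 1) ∧
      i + 1 ≤ 2 * cnt (ev L π) (axis i) b ∧ i + 2 ≤ 2 * cnt (ev L π) (!axis i) b := by
  induction i with
  | zero =>
    intro b hb
    rw [excTime_succ, excTime] at hb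
    have := nextTime_some hb
    have h1 := cnt_pos (ev L π) (axis 0) b
    have h2 := cnt_pos (ev L π) (!axis 0) b
    exact ⟨by omega, by omega, by omega, by omega⟩
  | succ i ih =>
    intro b hb
    rw [excTime_succ] at hb
    rcases ha : excTime L π (i + 1) with _ | a
    · rw [ha] at hb; simp at hb
    rw [ha] at hb
    have h1 := nextTime_some hb
    obtain ⟨i1, i2, i3, i4⟩ := ih a ha
    have h2 := step_other hπ i1 i2
    rw [axis_succ] at h1 ⊢
    rw [Bool.not_not]
    have hab : a + 1 ≤ b := by
      rcases Nat.lt_or_ge a b with h | h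
      · exact h
      · obtain rfl : a = b := by omega
        omega
    have h3 := cnt_mono (ev L π) (axis i) hab
    have h4 := cnt_mono (ev L π) (!axis i) (by omega : a ≤ b)
    exact ⟨h1.2.1, h1.2.2.1, by omega, by omega⟩

lemma isSome_of_le {L : ℕ} {π : Fin (L + 1) → ℤ × ℤ} {i j : ℕ} (h : (excTime L π j).isSome)
    (hij : i ≤ j) : (excTime L π i).isSome := by
  induction j, hij using Nat.le_induction with
  | base => exact h
  | succ j hj ih =>
    apply ih
    rw [excTime_succ] at h
    rcases hh : excTime L π j with _ | a
    · rw [hh] at h; simp at h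
    · simp

lemma isSome_pred {L : ℕ} {π : Fin (L + 1) → ℤ × ℤ} {i : ℕ} (h2 : 2 ≤ i) (h : i ≤ numExc L π) :
    (excTime L π (i - 1)).isSome := by
  have h3 : i - 1 ≤ lastIdx L π := by
    unfold numExc at h
    split_ifs at h <;> omega
  refine isSome_of_le (j := lastIdx L π) ?_ h3
  unfold lastIdx at h3 ⊢
  have : sSup {i | (excTime L π i).isSome} ∈ {i | (excTime L π i).isSome} := by
    apply Nat.sSup_mem
    · exact ⟨0, rfl⟩
    · by_contra hb
      rw [Nat.sSup_of_not_bddAbove hb] at h3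
      omega
  exact this

lemma coord_lip {L : ℕ} {q : ℕ → ℤ × ℤ} (hq : PN L q) (m : Bool) {a b : ℕ} (hab : a ≤ b)
    (hb : b ≤ L) : (coord m (q b) - coord m (q a)).natAbs ≤ b - a := by
  induction b, hab using Nat.le_induction with
  | base => simp
  | succ b h ih =>
    have := ih (by omega)
    have hs := (hq.2 b (by omega)).1
    unfold IsStep at hs
    simp only [Prod.ext_iff, Prod.fst_sub, Prod.snd_sub] at hs
    cases m <;> simp [coord] at this ⊢ <;> omega

lemma crosses_eq {L : ℕ} {π : Fin (L + 1) → ℤ × ℤ} {i : ℕ} (h2 : 2 ≤ i)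
    (h : crossesRange L π i) :
    (coord (axis (i - 1)) (ev L π (excEnd L π i)) -
      coord (axis (i - 1)) (ev L π (excEnd L π (i - 1)))).natAbs =
      cnt (ev L π) (axis (i - 1)) (excEnd L π i) - 1 := by
  unfold crossesRange at h
  rw [heightAt_eq, widthAt_eq] at h
  split_ifs at h with hi
  · have : axis (i - 1) = true := by
      unfold axis; rw [decide_eq_true_iff, Nat.even_iff]; omega
    rw [this]
    exact h
  · have : axis (i - 1) = false := by
      unfold axis; rw [decide_eq_false_iff_not, Nat.even_iff]; omega
    rw [this]
    exact h

lemma bad_structure {L : ℕ} {π : Fin (L + 1) → ℤ × ℤ} (hπ : π ∈ prudentSet L) {i k : ℕ}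
    (h2 : 2 ≤ i) (hk : 2 * k + 2 ≤ i) (hi : i ≤ numExc L π) (hc : crossesRange L π i) :
    ∃ m : Bool, ∃ s : ℕ, s + k ≤ L ∧ ∀ t, s ≤ t → t < s + k →
      ∃ j ≤ t, coord m (ev L π j) = coord m (ev L π (t + 1)) := by
  rw [prudent_iff] at hπ
  have hs := isSome_pred h2 hi
  have hc' := crosses_eq h2 hc
  obtain ⟨i, rfl⟩ : ∃ j, i = j + 2 := ⟨i - 2, by omega⟩
  rw [show i + 2 - 1 = i + 1 by omega] at hs hc'
  obtain ⟨a, ha⟩ := Option.isSome_iff_exists.1 hs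
  obtain ⟨s1, s2, s3, s4⟩ := sizes hπ i a ha
  have he : excEnd L π (i + 1) = a := by unfold excEnd; rw [ha]; rfl
  have hb : a ≤ excEnd L π (i + 2) ∧ excEnd L π (i + 2) ≤ L ∧
      cnt (ev L π) (axis (i + 1)) (excEnd L π (i + 2)) ≤ cnt (ev L π) (axis (i + 1)) a := by
    unfold excEnd
    rw [excTime_succ, ha]
    simp only [Option.bind_some]
    rcases hn : nextTime L (cnt (ev L π) (axis (i + 1))) a with _ | b
    · exact ⟨s1.le, le_rfl, nextTime_none hn s1.le⟩
    · have := nextTime_some hn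
      exact ⟨this.1, this.2.1.le, this.2.2.2⟩
  rw [he] at hc'
  set b := excEnd L π (i + 2)
  have hlip := coord_lip hπ (axis (i + 1)) hb.1 hb.2.1
  rw [← axis_succ] at s4
  have hm := cnt_mono (ev L π) (axis (i + 1)) hb.1
  refine ⟨axis (i + 1), a, by omega, fun t h1 h2 => ?_⟩
  apply exists_of_cnt_eq
  have e1 := cnt_mono (ev L π) (axis (i + 1)) h1
  have e2 := cnt_mono (ev L π) (axis (i + 1)) (Nat.le_succ t)
  have e3 := cnt_mono (ev L π) (axis (i + 1)) (by omega : t + 1 ≤ b)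
  simp only [Nat.succ_eq_add_one] at e2
  omega

/-- Paths with a long stretch not expanding along an axis. -/
def Bset (L k : ℕ) (m : Bool) (s : ℕ) : Set (Fin (L + 1) → ℤ × ℤ) :=
  {π | π ∈ prudentSet L ∧ s + k ≤ L ∧ ∀ t, s ≤ t → t < s + k →
      ∃ j ≤ t, coord m (ev L π j) = coord m (ev L π (t + 1))}

lemma prudent_finite (L : ℕ) : (prudentSet L).Finite := by
  have := card_upper true (fun _ => false) L (prudentSet L) subset_rfl (by simp)
  exact Set.finite_of_encard_le_coe this

lemma Bset_card {z : ℝ} (h1 : 2 / 5 < z) (h2 : z < 41 / 100)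
    (h3 : 1 - 2 * z - 2 * z ^ 2 + 2 * z ^ 3 = 0) (L k : ℕ) (m : Bool) (s : ℕ) :
    z ^ L * ((Bset L k m s).ncard : ℝ) ≤
      4 * Cup z ^ 2 * (L + 1) ^ 2 * (243 / 100 * z) ^ k := by
  have hz : 0 < z := by linarith
  have hC := Cup_pos h1 h2
  by_cases hs : s + k ≤ L
  · obtain ⟨n0, rfl⟩ : ∃ n0, L = n0 + k + s := ⟨L - s - k, by omega⟩
    set L := n0 + k + s with hL
    let J : ℕ → Bool := fun n => decide (n0 ≤ n ∧ n < n0 + k)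
    have hc := card_upper m J L (Bset L k m s) (fun π h => h.1) (by
      intro π hπ t ht hJ
      simp only [J, decide_eq_true_eq] at hJ
      exact hπ.2.2 t (by omega) (by omega))
    have hc' : ((Bset L k m s).ncard : ℝ) ≤ R m J L S := by
      have hfin : (Bset L k m s).Finite := (prudent_finite L).subset fun π h => h.1
      rw [← hfin.cast_ncard_eq] at hc
      exact_mod_cast hc
    have hr := R_restr m n0 k (Cup z * (n0 + 1) / z ^ n0) (by
      intro σ
      rw [le_div_iff₀ (by positivity), mul_comm]
      exact R0_upper h1 h2 h3 n0 σ) J (by simp [J]) s S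
    have hu := R0_upper h1 h2 h3 s S
    have hn0 : (n0 : ℝ) ≤ L := by rw [hL]; push_cast; linarith [(Nat.cast_nonneg k : (0:ℝ) ≤ k), (Nat.cast_nonneg s : (0:ℝ) ≤ s)]
    have hs0 : (s : ℝ) ≤ L := by rw [hL]; push_cast; linarith [(Nat.cast_nonneg k : (0:ℝ) ≤ k), (Nat.cast_nonneg n0 : (0:ℝ) ≤ n0)]
    calc z ^ L * ((Bset L k m s).ncard : ℝ)
        ≤ z ^ L * (Cup z * (n0 + 1) / z ^ n0 * (243 / 100) ^ k * 4 * R0 s S) := by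
          gcongr; exact hc'.trans hr
      _ = 4 * (Cup z * (n0 + 1)) * (243 / 100 * z) ^ k * (z ^ s * R0 s S) := by
          rw [hL, pow_add, pow_add, mul_pow]; field_simp
      _ ≤ 4 * (Cup z * (L + 1)) * (243 / 100 * z) ^ k * (Cup z * (L + 1)) := by
          exact mul_le_mul (by gcongr) (hu.trans (by gcongr)) (by positivity) (by positivity)
      _ = _ := by ring
  · have : Bset L k m s = ∅ := by
      rw [Set.eq_empty_iff_forall_notMem]
      intro π h
      exact hs h.2.1
    rw [this]
    simp
    positivity

lemma prob_le {z : ℝ} (h1 : 2 / 5 < z) (h2 : z < 41 / 100)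
    (h3 : 1 - 2 * z - 2 * z ^ 2 + 2 * z ^ 3 = 0) (L k : ℕ) (A : Set (Fin (L + 1) → ℤ × ℤ))
    (hA : ∀ π ∈ A, ∃ i, 2 * k + 2 ≤ i ∧ i ≤ numExc L π ∧ crossesRange L π i) :
    probUnif L A ≤ 8 * Cup z ^ 2 * (L + 1) ^ 3 * (243 / 100 * z) ^ k := by
  have hz : 0 < z := by linarith
  have hfin := prudent_finite L
  have hsub : A ∩ prudentSet L ⊆ ⋃ x ∈ (Finset.univ ×ˢ Finset.range (L + 1) : Finset (Bool × ℕ)),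
      Bset L k x.1 x.2 := by
    rintro π ⟨hπ, hp⟩
    obtain ⟨i, a, b, c⟩ := hA π hπ
    obtain ⟨m, s, hs, h⟩ := bad_structure hp (by omega) a b c
    simp only [Set.mem_iUnion]
    exact ⟨(m, s), by simp; omega, hp, hs, h⟩
  have hfB : (⋃ x ∈ (Finset.univ ×ˢ Finset.range (L + 1) : Finset (Bool × ℕ)),
      Bset L k x.1 x.2).Finite := hfin.subset (by
        intro π h
        simp only [Set.mem_iUnion] at h
        obtain ⟨x, _, h⟩ := h
        exact h.1)
  have hnum : z ^ L * (Nat.card ↥(A ∩ prudentSet L) : ℝ) ≤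
      8 * Cup z ^ 2 * (L + 1) ^ 3 * (243 / 100 * z) ^ k := by
    have e1 : (Nat.card ↥(A ∩ prudentSet L)) ≤
        ∑ x ∈ (Finset.univ ×ˢ Finset.range (L + 1) : Finset (Bool × ℕ)),
          (Bset L k x.1 x.2).ncard := by
      rw [Nat.card_coe_set_eq]
      exact (Set.ncard_le_ncard hsub hfB).trans (Finset.set_ncard_biUnion_le _ _)
    have e2 : (Nat.card ↥(A ∩ prudentSet L) : ℝ) ≤
        ∑ x ∈ (Finset.univ ×ˢ Finset.range (L + 1) : Finset (Bool × ℕ)),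
          ((Bset L k x.1 x.2).ncard : ℝ) := by exact_mod_cast e1
    calc _ ≤ z ^ L * ∑ x ∈ (Finset.univ ×ˢ Finset.range (L + 1) : Finset (Bool × ℕ)),
          ((Bset L k x.1 x.2).ncard : ℝ) := by gcongr
      _ = ∑ x ∈ (Finset.univ ×ˢ Finset.range (L + 1) : Finset (Bool × ℕ)),
          z ^ L * ((Bset L k x.1 x.2).ncard : ℝ) := by rw [Finset.mul_sum]
      _ ≤ ∑ x ∈ (Finset.univ ×ˢ Finset.range (L + 1) : Finset (Bool × ℕ)),
          4 * Cup z ^ 2 * (L + 1) ^ 2 * (243 / 100 * z) ^ k :=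
          Finset.sum_le_sum fun x _ => Bset_card h1 h2 h3 L k x.1 x.2
      _ = _ := by
        rw [Finset.sum_const, Finset.card_product]
        simp
        ring
  have hden : 1 ≤ z ^ L * (Nat.card ↥(prudentSet L) : ℝ) := by
    have e1 := R0_lower h1 h2 h3 L S
    have e2 := card_lower L
    rw [← hfin.cast_ncard_eq] at e2
    have e3 : (R0 L S : ℝ) ≤ (prudentSet L).ncard := by exact_mod_cast e2
    rw [Nat.card_coe_set_eq]
    calc (1 : ℝ) ≤ z ^ L * R0 L S := e1
      _ ≤ _ := by gcongr
  unfold probUnif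
  rw [← mul_div_mul_left _ _ (by positivity : z ^ L ≠ 0)]
  refine (div_le_self (by positivity) hden).trans hnum

end PSt

/-- **Few crossings of the range:** there is `δ > 0` such that with `P_{unif,L}`-probability
tending to `1`, no excursion of index `i` with `δ log L ≤ i ≤ γ_L(π)` crosses the range. -/
theorem no_late_crossing_excursions :
    ∃ δ : ℝ, 0 < δ ∧
      Tendsto (fun L : ℕ =>
          probUnif L {π | ∃ i : ℕ, δ * Real.log L ≤ (i : ℝ) ∧ i ≤ numExc L π ∧
            crossesRange L π i})
        atTop (nhds 0) := by
  obtain ⟨z, h1, h2, h3⟩ := PSt.exists_z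
  set θ : ℝ := 243 / 100 * z with hθ
  have hθ0 : 0 < θ := by linarith
  have hθ1 : θ < 1 := by linarith
  have hlog : Real.log θ < 0 := Real.log_neg hθ0 hθ1
  set δ : ℝ := 8 / (-Real.log θ) with hδ
  have hδ0 : 0 < δ := by
    have : 0 < -Real.log θ := by linarith
    positivity
  refine ⟨δ, hδ0, ?_⟩
  have hlim : Tendsto (fun L : ℕ => 64 * PSt.Cup z ^ 2 * θ⁻¹ ^ 2 / (L : ℝ)) atTop (nhds 0) :=
    tendsto_const_div_atTop_nhds_zero_nat _
  refine tendsto_of_tendsto_of_tendsto_of_le_of_le' tendsto_const_nhds hlim ?_ ?_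
  · refine Eventually.of_forall fun L => ?_
    unfold probUnif
    positivity
  · have hev : ∀ᶠ L : ℕ in atTop, 2 ≤ δ * Real.log L := by
      have : Tendsto (fun L : ℕ => δ * Real.log L) atTop atTop :=
        (Real.tendsto_log_atTop.comp tendsto_natCast_atTop_atTop).const_mul_atTop hδ0
      exact this.eventually_ge_atTop 2
    filter_upwards [hev, eventually_ge_atTop 1] with L hL hL1
    have hL0 : (1 : ℝ) ≤ L := by exact_mod_cast hL1
    set F := ⌊δ * Real.log L / 2⌋₊ with hF
    have hF1 : 1 ≤ F := by
      rw [hF, Nat.one_le_floor_iff]; linarith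
    have hFle : (F : ℝ) ≤ δ * Real.log L / 2 := Nat.floor_le (by linarith)
    have hFlt : δ * Real.log L / 2 < F + 1 := Nat.lt_floor_add_one _
    have hp := PSt.prob_le h1 h2 h3 L (F - 1)
      {π | ∃ i : ℕ, δ * Real.log L ≤ (i : ℝ) ∧ i ≤ numExc L π ∧ crossesRange L π i} (by
        rintro π ⟨i, a, b, c⟩
        refine ⟨i, ?_, b, c⟩
        have : ((2 * F : ℕ) : ℝ) ≤ i := by push_cast; linarith
        have : 2 * F ≤ i := by exact_mod_cast this
        omega)
    refine hp.trans ?_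
    rw [← hθ]
    have hpow : θ ^ (F - 1) ≤ θ⁻¹ ^ 2 / (L : ℝ) ^ 4 := by
      have e1 : θ ^ (F - 1) = θ⁻¹ ^ 2 * θ ^ (F + 1) := by
        obtain ⟨G, hG⟩ : ∃ G, F = G + 1 := ⟨F - 1, by omega⟩
        rw [hG, Nat.add_sub_cancel]
        field_simp
        ring
      have e2 : θ ^ (F + 1) ≤ 1 / (L : ℝ) ^ 4 := by
        have : θ ^ (F + 1) = Real.exp (((F + 1 : ℕ) : ℝ) * Real.log θ) := by
          rw [Real.exp_nat_mul, Real.exp_log hθ0]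
        rw [this]
        have h4 : (1 : ℝ) / (L : ℝ) ^ 4 = Real.exp (-(4 * Real.log L)) := by
          rw [Real.exp_neg, one_div]
          congr 1
          rw [show (4 : ℝ) * Real.log L = ((4 : ℕ) : ℝ) * Real.log L by norm_num,
            Real.exp_nat_mul, Real.exp_log (by linarith)]
        rw [h4, Real.exp_le_exp]
        have h5 : δ * Real.log θ = -8 := by
          rw [hδ, div_mul_eq_mul_div, div_eq_iff (neg_ne_zero.2 hlog.ne)]; ring
        push_cast
        nlinarith [mul_lt_mul_of_neg_right hFlt hlog]
      rw [e1, div_eq_mul_one_div]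
      gcongr
    have hC := PSt.Cup_pos h1 h2
    calc 8 * PSt.Cup z ^ 2 * ((L : ℝ) + 1) ^ 3 * θ ^ (F - 1)
        ≤ 8 * PSt.Cup z ^ 2 * ((L : ℝ) + L) ^ 3 * (θ⁻¹ ^ 2 / (L : ℝ) ^ 4) := by gcongr
      _ = _ := by field_simp; ring
end

section
/- For every δ > 0 there exists κ > 0 such that lim_{L→∞} P_{unif,L}( T_1(π) + ⋯ + T_{m_L}(π) ≥ κ (log L)² ) = 0, where m_L = min(γ_L(π), ⌊δ log L⌋). In words: with probability tending to 1, the total length of the first δ log L excursions of the uniform prudent walk is at most κ (log L)². -/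
open Filter Set

/-! ### Geometric part: the automaton followed by a prudent walk -/

namespace PW

def dot (u z : ℤ × ℤ) : ℤ := u.1 * z.1 + u.2 * z.2

lemma dot_add (u a b : ℤ × ℤ) : dot u (a + b) = dot u a + dot u b := by
  simp [dot]; ring
lemma dot_neg (u a : ℤ × ℤ) : dot u (-a) = - dot u a := by
  simp [dot]; ring
lemma neg_dot (u a : ℤ × ℤ) : dot (-u) a = - dot u a := by
  simp [dot]; ring
lemma dot_smul (u a : ℤ × ℤ) (k : ℤ) : dot u (k • a) = k * dot u a := by
  simp [dot]; ring

def dirs : Finset (ℤ × ℤ) := {(1, 0), (-1, 0), (0, 1), (0, -1)}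

lemma mem_dirs (s : ℤ × ℤ) : s ∈ dirs ↔ IsStep s := by
  simp [dirs, IsStep]

/-- orthonormal lattice frames -/
def Fr (u v : ℤ × ℤ) : Prop :=
  ((u = (1, 0) ∨ u = (-1, 0)) ∧ (v = (0, 1) ∨ v = (0, -1))) ∨
  ((u = (0, 1) ∨ u = (0, -1)) ∧ (v = (1, 0) ∨ v = (-1, 0)))

lemma Fr.swap {u v : ℤ × ℤ} (h : Fr u v) : Fr v u := by
  unfold Fr at *; tauto

lemma Fr.negr {u v : ℤ × ℤ} (h : Fr u v) : Fr u (-v) := by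
  rcases h with ⟨rfl | rfl, rfl | rfl⟩ | ⟨rfl | rfl, rfl | rfl⟩ <;> simp [Fr]

lemma Fr.uu {u v : ℤ × ℤ} (h : Fr u v) : dot u u = 1 := by
  rcases h with ⟨rfl | rfl, rfl | rfl⟩ | ⟨rfl | rfl, rfl | rfl⟩ <;> simp [dot]

lemma Fr.uv {u v : ℤ × ℤ} (h : Fr u v) : dot u v = 0 := by
  rcases h with ⟨rfl | rfl, rfl | rfl⟩ | ⟨rfl | rfl, rfl | rfl⟩ <;> simp [dot]

lemma Fr.vv {u v : ℤ × ℤ} (h : Fr u v) : dot v v = 1 := h.swap.uu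
lemma Fr.vu {u v : ℤ × ℤ} (h : Fr u v) : dot v u = 0 := h.swap.uv

lemma Fr.ext {u v a b : ℤ × ℤ} (h : Fr u v) (h1 : dot u a = dot u b) (h2 : dot v a = dot v b) :
    a = b := by
  rcases h with ⟨rfl | rfl, rfl | rfl⟩ | ⟨rfl | rfl, rfl | rfl⟩ <;> simp [dot] at h1 h2 <;>
    exact Prod.ext (by omega) (by omega)

lemma Fr.par {u v : ℤ × ℤ} (h : Fr u v) : v.2 = 0 ↔ ¬ u.2 = 0 := by
  rcases h with ⟨rfl | rfl, rfl | rfl⟩ | ⟨rfl | rfl, rfl | rfl⟩ <;> simp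

lemma Fr.sum {u v : ℤ × ℤ} (h : Fr u v) (f : ℤ × ℤ → ℝ) :
    ∑ s ∈ dirs, f s = f u + f (-u) + f v + f (-v) := by
  have : ∑ s ∈ dirs, f s = f (1, 0) + (f (-1, 0) + (f (0, 1) + f (0, -1))) := by
    unfold dirs
    rw [Finset.sum_insert, Finset.sum_insert, Finset.sum_insert, Finset.sum_singleton] <;> simp
  rw [this]
  rcases h with ⟨rfl | rfl, rfl | rfl⟩ | ⟨rfl | rfl, rfl | rfl⟩ <;> simp <;> ring

lemma Fr.snd_iff {u v a b : ℤ × ℤ} (h : Fr u v) (hu : u.2 = 0) :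
    a.2 = b.2 ↔ dot v a = dot v b := by
  rcases h with ⟨rfl | rfl, rfl | rfl⟩ | ⟨rfl | rfl, rfl | rfl⟩ <;> simp [dot] at hu ⊢

lemma Fr.fst_iff {u v a b : ℤ × ℤ} (h : Fr u v) (hu : ¬ u.2 = 0) :
    a.1 = b.1 ↔ dot v a = dot v b := by
  rcases h with ⟨rfl | rfl, rfl | rfl⟩ | ⟨rfl | rfl, rfl | rfl⟩ <;> simp [dot] at hu ⊢

open Classical in
/-- number of completed excursions of a path given as list of sites, newest first -/
noncomputable def kc : List (ℤ × ℤ) → ℕ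
  | [] => 0
  | z :: l => kc l + if l ≠ [] ∧ (if Even (kc l) then ∀ w ∈ l, w.2 ≠ z.2 else ∀ w ∈ l, w.1 ≠ z.1)
      then 1 else 0

def ok (z : ℤ × ℤ) (l : List (ℤ × ℤ)) (s : ℤ × ℤ) : Prop :=
  ∀ k : ℕ, 1 ≤ k → z + (k : ℤ) • s ∉ z :: l

open Classical in
/-- weighted number of `n`-step prudent extensions -/
noncomputable def N : ℕ → (List (ℤ × ℤ) → ℝ) → ℤ × ℤ → List (ℤ × ℤ) → ℝ
  | 0, φ, z, l => φ (z :: l)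
  | n + 1, φ, z, l => ∑ s ∈ dirs, if ok z l s then N n φ (z + s) (z :: l) else 0

inductive Ty
  | F | U | D

def Ty.flip : Ty → Ty
  | .F => .F
  | .U => .D
  | .D => .U

structure St where
  ty : Ty
  p : ℕ
  q : ℕ
  o : ℕ
  k : ℕ

def tyCond (u v z : ℤ × ℤ) (l : List (ℤ × ℤ)) : Ty → Prop
  | .F => ∀ w ∈ l, dot u w < dot u z
  | .U => z - v ∈ l ∧ ∀ w ∈ l, dot u w = dot u z → dot v w < dot v z
  | .D => z + v ∈ l ∧ ∀ w ∈ l, dot u w = dot u z → dot v z < dot v w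

structure Inv (z : ℤ × ℤ) (l : List (ℤ × ℤ)) (u v : ℤ × ℤ) (ty : Ty) (p q o k : ℕ) : Prop where
  fr : Fr u v
  hk : kc (z :: l) = k
  par : Even k ↔ u.2 = 0
  b1 : ∀ w ∈ z :: l, dot u w ≤ dot u z
  b2 : ∀ w ∈ z :: l, dot v w ≤ dot v z + p
  b3 : ∀ w ∈ z :: l, dot v z - q ≤ dot v w
  b4 : ∀ w ∈ z :: l, dot u z - o ≤ dot u w
  c1 : ∀ y : ℤ, -(o : ℤ) ≤ y → y ≤ 0 → ∃ w ∈ z :: l, dot u w = dot u z + y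
  c2 : ∀ y : ℤ, -(q : ℤ) ≤ y → y ≤ p → ∃ w ∈ z :: l, dot v w = dot v z + y ∧ dot u w < dot u z
  t : tyCond u v z l ty

lemma Inv.flip {z l u v ty p q o k} (h : Inv z l u v ty p q o k) :
    Inv z l u (-v) ty.flip q p o k where
  fr := h.fr.negr
  hk := h.hk
  par := h.par
  b1 := h.b1
  b2 := fun w hw => by have := h.b3 w hw; simp only [neg_dot]; omega
  b3 := fun w hw => by have := h.b2 w hw; simp only [neg_dot]; omega
  b4 := h.b4
  c1 := h.c1
  c2 := fun y h1 h2 => by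
    obtain ⟨w, hw, e1, e2⟩ := h.c2 (-y) (by omega) (by omega)
    exact ⟨w, hw, by simp only [neg_dot]; omega, e2⟩
  t := by
    have := h.t
    cases ty
    · exact this
    · refine ⟨by simpa [sub_eq_add_neg] using this.1, fun w hw e => ?_⟩
      have := this.2 w hw e
      simp only [neg_dot]; omega
    · refine ⟨by simpa [sub_eq_add_neg] using this.1, fun w hw e => ?_⟩
      have := this.2 w hw e
      simp only [neg_dot]; omega

lemma kc_same {z l u v ty p q o k} (h : Inv z l u v ty p q o k) (s : ℤ × ℤ)
    (hs : ∃ w ∈ z :: l, dot v w = dot v (z + s)) : kc ((z + s) :: z :: l) = k := by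
  obtain ⟨w, hw, e⟩ := hs
  rw [kc, h.hk, if_neg]
  · rfl
  rintro ⟨-, h2⟩
  by_cases hu : u.2 = 0
  · rw [if_pos (h.par.2 hu)] at h2
    exact h2 w hw ((h.fr.snd_iff hu).2 e)
  · rw [if_neg (fun h' => hu (h.par.1 h'))] at h2
    exact h2 w hw ((h.fr.fst_iff hu).2 e)

lemma kc_exit {z l u v ty p q o k} (h : Inv z l u v ty p q o k) (s : ℤ × ℤ)
    (hs : ∀ w ∈ z :: l, dot v w ≠ dot v (z + s)) : kc ((z + s) :: z :: l) = k + 1 := by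
  rw [kc, h.hk, if_pos]
  refine ⟨by simp, ?_⟩
  by_cases hu : u.2 = 0
  · rw [if_pos (h.par.2 hu)]
    exact fun w hw e => hs w hw ((h.fr.snd_iff hu).1 e)
  · rw [if_neg (fun h' => hu (h.par.1 h'))]
    exact fun w hw e => hs w hw ((h.fr.fst_iff hu).1 e)

lemma Inv.fwd {z l u v ty p q o k} (h : Inv z l u v ty p q o k) :
    ok z l u ∧ Inv (z + u) (z :: l) u v .F p q (o + 1) k := by
  have a1 := h.fr.uu
  have a2 := h.fr.vu
  constructor
  · intro j hj hm
    have := h.b1 _ hm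
    simp only [dot_add, dot_smul] at this
    rw [a1] at this; omega
  · have e1 : dot u (z + u) = dot u z + 1 := by rw [dot_add, a1]
    have e2 : dot v (z + u) = dot v z := by rw [dot_add, a2, add_zero]
    refine ⟨h.fr, kc_same h u ⟨z, by simp, e2.symm⟩, h.par, ?_, ?_, ?_, ?_, ?_, ?_, ?_⟩
    · intro w hw
      rcases List.mem_cons.1 hw with rfl | hw
      · rfl
      · have := h.b1 w hw; omega
    · intro w hw
      rcases List.mem_cons.1 hw with rfl | hw
      · omega
      · have := h.b2 w hw; omega
    · intro w hw
      rcases List.mem_cons.1 hw with rfl | hw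
      · omega
      · have := h.b3 w hw; omega
    · intro w hw
      rcases List.mem_cons.1 hw with rfl | hw
      · omega
      · have := h.b4 w hw; omega
    · intro y h1 h2
      rcases eq_or_lt_of_le h2 with rfl | h2
      · exact ⟨_, List.mem_cons_self, by omega⟩
      · obtain ⟨w, hw, e⟩ := h.c1 (y + 1) (by push_cast at h1; omega) (by omega)
        exact ⟨w, List.mem_cons_of_mem _ hw, by omega⟩
    · intro y h1 h2
      obtain ⟨w, hw, e, e'⟩ := h.c2 y h1 h2
      exact ⟨w, List.mem_cons_of_mem _ hw, by omega, by omega⟩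
    · intro w hw
      have := h.b1 w hw; omega

lemma Inv.bwd {z l u v ty p q o k} (h : Inv z l u v ty p q o k) : ¬ ok z l (-u) := by
  intro hok
  obtain ⟨w, hw, e, e'⟩ := h.c2 0 (by omega) (by omega)
  have a1 := h.fr.uu
  have a2 := h.fr.vu
  refine hok (dot u z - dot u w).toNat (by omega) ?_
  convert hw using 1
  apply h.fr.ext
  · rw [dot_add, dot_smul, dot_neg, a1, Int.toNat_of_nonneg (by omega)]; ring
  · rw [dot_add, dot_smul, dot_neg, a2]; omega

lemma Inv.upD {z l u v p q o k} (h : Inv z l u v .D p q o k) : ¬ ok z l v := by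
  intro hok
  exact hok 1 le_rfl (by simpa using Or.inr h.t.1)

lemma Inv.upok {z l u v ty p q o k} (h : Inv z l u v ty p q o k) (ht : ty ≠ .D) : ok z l v := by
  have a1 := h.fr.vv
  have a2 := h.fr.uv
  intro j hj hm
  have e1 : dot u (z + (j : ℤ) • v) = dot u z := by rw [dot_add, dot_smul, a2]; ring
  have e2 : dot v (z + (j : ℤ) • v) = dot v z + j := by rw [dot_add, dot_smul, a1]; ring
  generalize z + (j : ℤ) • v = w at *
  rcases List.mem_cons.1 hm with rfl | hm
  · omega
  · have := h.t
    cases ty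
    · have := this w hm; omega
    · have := this.2 w hm e1; omega
    · exact ht rfl

lemma Inv.upin {z l u v ty p q o k} (h : Inv z l u v ty (p + 1) q o k) (ht : ty ≠ .D) :
    Inv (z + v) (z :: l) u v .U p (q + 1) o k := by
  have a1 := h.fr.vv
  have a2 := h.fr.uv
  have e1 : dot u (z + v) = dot u z := by rw [dot_add, a2, add_zero]
  have e2 : dot v (z + v) = dot v z + 1 := by rw [dot_add, a1]
  refine ⟨h.fr, kc_same h v ?_, h.par, ?_, ?_, ?_, ?_, ?_, ?_, ?_⟩
  · obtain ⟨w, hw, e, -⟩ := h.c2 1 (by omega) (by push_cast; omega)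
    exact ⟨w, hw, by omega⟩
  · intro w hw
    rcases List.mem_cons.1 hw with rfl | hw
    · rfl
    · have := h.b1 w hw; omega
  · intro w hw
    rcases List.mem_cons.1 hw with rfl | hw
    · omega
    · have := h.b2 w hw; push_cast at this; omega
  · intro w hw
    rcases List.mem_cons.1 hw with rfl | hw
    · omega
    · have := h.b3 w hw; push_cast; omega
  · intro w hw
    rcases List.mem_cons.1 hw with rfl | hw
    · omega
    · have := h.b4 w hw; omega
  · intro y h1 h2
    obtain ⟨w, hw, e⟩ := h.c1 y h1 h2
    exact ⟨w, List.mem_cons_of_mem _ hw, by omega⟩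
  · intro y h1 h2
    obtain ⟨w, hw, e, e'⟩ := h.c2 (y + 1) (by push_cast at h1; omega) (by push_cast; omega)
    exact ⟨w, List.mem_cons_of_mem _ hw, by omega, by omega⟩
  · refine ⟨by simp, fun w hw e => ?_⟩
    rcases List.mem_cons.1 hw with rfl | hw
    · omega
    · have := h.t
      cases ty
      · have := this w hw; omega
      · have := this.2 w hw (by omega); omega
      · exact absurd rfl ht

lemma Inv.upex {z l u v ty q o k} (h : Inv z l u v ty 0 q o k) :
    Inv (z + v) (z :: l) v u .F 0 o (q + 1) (k + 1) := by
  have a1 := h.fr.vv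
  have a2 := h.fr.uv
  have e1 : dot u (z + v) = dot u z := by rw [dot_add, a2, add_zero]
  have e2 : dot v (z + v) = dot v z + 1 := by rw [dot_add, a1]
  refine ⟨h.fr.swap, kc_exit h v ?_, ?_, ?_, ?_, ?_, ?_, ?_, ?_, ?_⟩
  · intro w hw
    have := h.b2 w hw
    push_cast at this; omega
  · rw [h.fr.par, ← h.par, Nat.even_add_one]
  · intro w hw
    rcases List.mem_cons.1 hw with rfl | hw
    · rfl
    · have := h.b2 w hw; push_cast at this; omega
  · intro w hw
    rcases List.mem_cons.1 hw with rfl | hw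
    · omega
    · have := h.b1 w hw; push_cast; omega
  · intro w hw
    rcases List.mem_cons.1 hw with rfl | hw
    · omega
    · have := h.b4 w hw; omega
  · intro w hw
    rcases List.mem_cons.1 hw with rfl | hw
    · omega
    · have := h.b3 w hw; push_cast; omega
  · intro y h1 h2
    rcases eq_or_lt_of_le h2 with rfl | h2
    · exact ⟨_, List.mem_cons_self, by omega⟩
    · obtain ⟨w, hw, e, -⟩ := h.c2 (y + 1) (by push_cast at h1; omega) (by push_cast; omega)
      exact ⟨w, List.mem_cons_of_mem _ hw, by omega⟩
  · intro y h1 h2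
    obtain ⟨w, hw, e⟩ := h.c1 y h1 (by simpa using h2)
    have := h.b2 w hw
    push_cast at this
    exact ⟨w, List.mem_cons_of_mem _ hw, by omega, by omega⟩
  · intro w hw
    have := h.b2 w hw
    push_cast at this; omega

/-- abstract invariant -/
def I (z : ℤ × ℤ) (l : List (ℤ × ℤ)) (σ : St) : Prop :=
  ∃ u v, Inv z l u v σ.ty σ.p σ.q σ.o σ.k

def St.fwd (σ : St) : St := ⟨.F, σ.p, σ.q, σ.o + 1, σ.k⟩

def St.up (σ : St) : St :=
  match σ.p with
  | 0 => ⟨.F, 0, σ.o, σ.q + 1, σ.k + 1⟩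
  | p + 1 => ⟨.U, p, σ.q + 1, σ.o, σ.k⟩

def St.dn (σ : St) : St :=
  match σ.q with
  | 0 => ⟨.F, 0, σ.o, σ.p + 1, σ.k + 1⟩
  | q + 1 => ⟨.D, σ.p + 1, q, σ.o, σ.k⟩

noncomputable def St.sum (σ : St) (V : St → ℝ) : ℝ :=
  match σ.ty with
  | .F => V σ.fwd + V σ.up + V σ.dn
  | .U => V σ.fwd + V σ.up
  | .D => V σ.fwd + V σ.dn

lemma Inv.up {z l u v} {σ : St} (h : Inv z l u v σ.ty σ.p σ.q σ.o σ.k) (ht : σ.ty ≠ .D) :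
    I (z + v) (z :: l) σ.up := by
  obtain ⟨ty, p, q, o, k⟩ := σ
  cases p with
  | zero => exact ⟨_, _, h.upex⟩
  | succ p => exact ⟨_, _, h.upin ht⟩

lemma Inv.dn {z l u v} {σ : St} (h : Inv z l u v σ.ty σ.p σ.q σ.o σ.k) (ht : σ.ty ≠ .U) :
    I (z + -v) (z :: l) σ.dn := by
  obtain ⟨ty, p, q, o, k⟩ := σ
  have h' := h.flip
  cases q with
  | zero => exact ⟨_, _, h'.upex⟩
  | succ q =>
    have := (h'.upin (by cases ty <;> simp_all [Ty.flip])).flip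
    exact ⟨_, _, this⟩

lemma Inv.N_succ {z l u v} {σ : St} (h : Inv z l u v σ.ty σ.p σ.q σ.o σ.k)
    (n : ℕ) (φ : List (ℤ × ℤ) → ℝ) :
    N (n + 1) φ z l = match σ.ty with
      | .F => N n φ (z + u) (z :: l) + N n φ (z + v) (z :: l) + N n φ (z + -v) (z :: l)
      | .U => N n φ (z + u) (z :: l) + N n φ (z + v) (z :: l)
      | .D => N n φ (z + u) (z :: l) + N n φ (z + -v) (z :: l) := by
  rw [N, h.fr.sum, if_pos h.fwd.1, if_neg h.bwd]
  obtain ⟨ty, p, q, o, k⟩ := σ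
  cases ty
  · rw [if_pos (h.upok (by simp)), if_pos (h.flip.upok (by simp [Ty.flip]))]
    simp
  · rw [if_pos (h.upok (by simp)), if_neg h.flip.upD]
    simp
  · rw [if_neg h.upD, if_pos (h.flip.upok (by simp [Ty.flip]))]
    simp

theorem N_le {φ : List (ℤ × ℤ) → ℝ} {V : ℕ → St → ℝ}
    (h0 : ∀ z l σ, I z l σ → φ (z :: l) ≤ V 0 σ)
    (h1 : ∀ n σ, σ.sum (V n) ≤ V (n + 1) σ) (n : ℕ) :
    ∀ z l σ, I z l σ → N n φ z l ≤ V n σ := by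
  induction n with
  | zero => exact h0
  | succ n ih =>
    rintro z l σ ⟨u, v, h⟩
    refine le_trans ?_ (h1 n σ)
    rw [h.N_succ]
    have hf := ih _ _ σ.fwd ⟨u, v, h.fwd.2⟩
    unfold St.sum
    have hu := fun ht => ih _ _ _ (h.up ht)
    have hd := fun ht => ih _ _ _ (h.dn ht)
    rcases hty : σ.ty with _ | _ | _ <;> simp only [hty] at hu hd ⊢ <;> simp at hu hd <;> linarith

theorem le_N {φ : List (ℤ × ℤ) → ℝ} {V : ℕ → St → ℝ}
    (h0 : ∀ z l σ, I z l σ → V 0 σ ≤ φ (z :: l))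
    (h1 : ∀ n σ, V (n + 1) σ ≤ σ.sum (V n)) (n : ℕ) :
    ∀ z l σ, I z l σ → V n σ ≤ N n φ z l := by
  induction n with
  | zero => exact h0
  | succ n ih =>
    rintro z l σ ⟨u, v, h⟩
    refine le_trans (h1 n σ) ?_
    rw [h.N_succ]
    have hf := ih _ _ σ.fwd ⟨u, v, h.fwd.2⟩
    unfold St.sum
    have hu := fun ht => ih _ _ _ (h.up ht)
    have hd := fun ht => ih _ _ _ (h.dn ht)
    rcases hty : σ.ty with _ | _ | _ <;> simp only [hty] at hu hd ⊢ <;> simp at hu hd <;> linarith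

lemma inv_start (s : ℤ × ℤ) (hs : s ∈ dirs) :
    ok 0 [] s ∧ ∃ k ≤ 1, I (0 + s) [0] ⟨.F, 0, 0, 1, k⟩ := by
  have key : ∀ u v : ℤ × ℤ, ∀ k : ℕ, Fr u v → kc [u, 0] = k → (Even k ↔ u.2 = 0) →
      Inv (0 + u) [0] u v .F 0 0 1 k := by
    intro u v k hf h1 h2
    have a1 := hf.uu
    have a2 := hf.vu
    have e1 : dot u 0 = 0 := by simp [dot]
    have e2 : dot v 0 = 0 := by simp [dot]
    rw [zero_add]
    refine ⟨hf, h1, h2, ?_, ?_, ?_, ?_, ?_, ?_, ?_⟩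
    · simp [a1, e1]
    · simp [a2, e2]
    · simp [a2, e2]
    · simp [a1, e1]
    · intro y h1 h2
      obtain rfl | rfl : y = 0 ∨ y = -1 := by push_cast at h1; omega
      · exact ⟨u, by simp, by omega⟩
      · exact ⟨0, by simp, by omega⟩
    · intro y h1 h2
      obtain rfl : y = 0 := by push_cast at h1 h2; omega
      exact ⟨0, by simp, by omega, by omega⟩
    · intro w hw
      simp only [List.mem_singleton] at hw
      subst hw; omega
  constructor
  · intro k hk hm
    rw [mem_dirs] at hs
    rcases hs with rfl | rfl | rfl | rfl <;> simp [Prod.ext_iff] at hm <;> omega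
  · rw [mem_dirs] at hs
    rcases hs with rfl | rfl | rfl | rfl
    · exact ⟨0, by simp, _, (0, 1), key _ _ _ (by simp [Fr]) (by simp [kc]) (by simp)⟩
    · exact ⟨0, by simp, _, (0, 1), key _ _ _ (by simp [Fr]) (by simp [kc]) (by simp)⟩
    · exact ⟨1, by simp, _, (1, 0), key _ _ _ (by simp [Fr]) (by simp [kc]) (by simp)⟩
    · exact ⟨1, by simp, _, (1, 0), key _ _ _ (by simp [Fr]) (by simp [kc]) (by simp)⟩

set_option linter.unusedSimpArgs false

/-! ### Analytic part -/

lemma exists_x : ∃ x : ℝ, 2 / 5 ≤ x ∧ x ≤ 41 / 100 ∧ 1 - 2 * x - 2 * x ^ 2 + 2 * x ^ 3 = 0 := by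
  have hc : ContinuousOn (fun x : ℝ => 1 - 2 * x - 2 * x ^ 2 + 2 * x ^ 3)
      (Set.Icc (2 / 5) (41 / 100)) := by fun_prop
  have := intermediate_value_Icc' (by norm_num) hc
  obtain ⟨x, hx, e⟩ := this (show (0 : ℝ) ∈ _ by constructor <;> norm_num)
  exact ⟨x, hx.1, hx.2, e⟩

noncomputable def gam (x : ℝ) : ℝ := x / (1 - 2 * x ^ 2)

lemma gam_eq {x : ℝ} (h1 : 2 / 5 ≤ x) (h2 : x ≤ 41 / 100) :
    gam x = x * (1 + gam x * (2 * x)) := by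
  have h0 : (1 - 2 * x ^ 2) ≠ 0 := by nlinarith
  have h3 : gam x * (1 - 2 * x ^ 2) = x := div_mul_cancel₀ _ h0
  linear_combination h3

lemma gam_eq2 {x : ℝ} (h1 : 2 / 5 ≤ x) (h2 : x ≤ 41 / 100)
    (h : 1 - 2 * x - 2 * x ^ 2 + 2 * x ^ 3 = 0) :
    1 = x * (1 + 1 + gam x * (2 * x)) := by
  have h0 : (1 - 2 * x ^ 2) ≠ 0 := by nlinarith
  have h3 : gam x * (1 - 2 * x ^ 2) = x := div_mul_cancel₀ _ h0
  apply mul_right_cancel₀ h0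
  linear_combination h - 2 * x ^ 2 * h3

lemma gam_nonneg {x : ℝ} (h1 : 2 / 5 ≤ x) (h2 : x ≤ 41 / 100) : 0 ≤ gam x := by
  unfold gam; apply div_nonneg <;> nlinarith

lemma gam_le {x : ℝ} (h1 : 2 / 5 ≤ x) (h2 : x ≤ 41 / 100) : gam x ≤ 1 := by
  unfold gam; rw [div_le_one] <;> nlinarith

noncomputable def hh (x : ℝ) (p : ℕ) : Ty → ℝ
  | .F => (2 * x) ^ p
  | .U => (2 * x) ^ (p + 1)
  | .D => gam x * (2 * x) ^ p

lemma hh_F (x : ℝ) (p : ℕ) : hh x p .F = (2 * x) ^ p := rfl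
lemma hh_U (x : ℝ) (p : ℕ) : hh x p .U = (2 * x) ^ (p + 1) := rfl
lemma hh_D (x : ℝ) (p : ℕ) : hh x p .D = gam x * (2 * x) ^ p := rfl

lemma hh_nonneg {x : ℝ} (h1 : 2 / 5 ≤ x) (h2 : x ≤ 41 / 100) (p : ℕ) (t : Ty) :
    0 ≤ hh x p t := by
  have := gam_nonneg h1 h2
  cases t <;> simp only [hh] <;> positivity

lemma hh_le {x : ℝ} (h1 : 2 / 5 ≤ x) (h2 : x ≤ 41 / 100) (p : ℕ) (t : Ty) :
    hh x p t ≤ 1 := by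
  have h0 := gam_nonneg h1 h2
  have h3 := gam_le h1 h2
  have h4 : ∀ p : ℕ, (2 * x) ^ p ≤ 1 := fun p => pow_le_one₀ (by linarith) (by linarith)
  have h5 : ∀ p : ℕ, 0 ≤ (2 * x) ^ p := fun p => by positivity
  cases t <;> simp only [hh]
  · exact h4 _
  · exact h4 _
  · exact mul_le_one₀ h3 (h5 _) (h4 _)

/-- lower bound on the number of prudent paths -/
theorem lower {x : ℝ} (h1 : 2 / 5 ≤ x) (h2 : x ≤ 41 / 100)
    (h : 1 - 2 * x - 2 * x ^ 2 + 2 * x ^ 3 = 0) (n : ℕ) (z l σ) (hI : I z l σ) :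
    hh x σ.p σ.ty * (1 / x) ^ n ≤ N n (fun _ => 1) z l := by
  have hx : 0 < x := by linarith
  have g0 := gam_nonneg h1 h2
  have g1 := gam_le h1 h2
  have e1 := gam_eq h1 h2
  have e2 := gam_eq2 h1 h2 h
  set g := gam x with hg
  have h4 : ∀ p : ℕ, (2 * x) ^ p ≤ 1 := fun p => pow_le_one₀ (by linarith) (by linarith)
  have h5 : ∀ p : ℕ, 0 ≤ (2 * x) ^ p := fun p => by positivity
  refine le_N (V := fun n σ => hh x σ.p σ.ty * (1 / x) ^ n) ?_ ?_ n z l σ hI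
  · intro z l σ _
    simpa using hh_le h1 h2 σ.p σ.ty
  · intro n σ
    have key : hh x σ.p σ.ty ≤ x * σ.sum (fun σ => hh x σ.p σ.ty) := by
      have hup : hh x σ.up.p σ.up.ty = (2 * x) ^ σ.p := by
        unfold St.up
        rcases hp : σ.p with _ | p <;> simp [hh]
      have hdn : g * (2 * x) ^ (σ.p + 1) ≤ hh x σ.dn.p σ.dn.ty := by
        unfold St.dn
        rcases hp : σ.q with _ | q <;> simp only [hh]
        · rw [pow_zero]
          exact mul_le_one₀ g1 (h5 _) (h4 _)
        · exact le_rfl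
      have hf : hh x σ.fwd.p σ.fwd.ty = (2 * x) ^ σ.p := rfl
      have hp := h5 σ.p
      unfold St.sum
      rcases hty : σ.ty with _ | _ | _ <;> simp only [hh_F, hh_U, hh_D, hf, hup, ← hg]
      · calc (2 * x) ^ σ.p = x * (1 + 1 + g * (2 * x)) * (2 * x) ^ σ.p := by rw [← e2, one_mul]
          _ = x * ((2 * x) ^ σ.p + (2 * x) ^ σ.p + g * (2 * x) ^ (σ.p + 1)) := by ring
          _ ≤ _ := by gcongr
      · apply le_of_eq; ring
      · calc g * (2 * x) ^ σ.p = x * (1 + g * (2 * x)) * (2 * x) ^ σ.p := by rw [← e1]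
          _ = x * ((2 * x) ^ σ.p + g * (2 * x) ^ (σ.p + 1)) := by ring
          _ ≤ _ := by gcongr
    have hs : σ.sum (fun σ => hh x σ.p σ.ty * (1 / x) ^ n)
        = σ.sum (fun σ => hh x σ.p σ.ty) * (1 / x) ^ n := by
      unfold St.sum
      rcases σ.ty with _ | _ | _ <;> simp only <;> ring
    simp only [hs]
    rw [pow_succ, mul_comm ((1 / x) ^ n), ← mul_assoc]
    have : 0 ≤ (1 / x) ^ n := by positivity
    refine mul_le_mul_of_nonneg_right ?_ this
    rw [mul_one_div, div_le_iff₀ hx]; linarith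

noncomputable def ff : Ty → ℝ
  | .F => 7
  | .U => 5
  | .D => 5

lemma ff_F : ff .F = 7 := rfl
lemma ff_U : ff .U = 5 := rfl
lemma ff_D : ff .D = 5 := rfl

/-- bound on number of paths with few excursions -/
theorem prefixBound {φ : List (ℤ × ℤ) → ℝ} {C : ℝ} {m : ℕ} (hC : 0 ≤ C)
    (hφ : ∀ z l σ, I z l σ → φ (z :: l) ≤ if σ.k ≤ m then C else 0) (n : ℕ) (z l σ)
    (hI : I z l σ) :
    N n φ z l ≤ C * ff σ.ty * (7 / 5) ^ m / (7 / 5) ^ σ.k * (17 / 7) ^ n := by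
  refine N_le (V := fun n σ => C * ff σ.ty * (7 / 5) ^ m / (7 / 5) ^ σ.k * (17 / 7) ^ n)
    ?_ ?_ n z l σ hI
  · intro z l σ hI
    have hf : 5 ≤ ff σ.ty := by cases σ.ty <;> norm_num [ff]
    refine (hφ z l σ hI).trans ?_
    split_ifs with hk
    · rw [pow_zero, mul_one, mul_div_assoc]
      have h1 : (1 : ℝ) ≤ (7 / 5) ^ m / (7 / 5) ^ σ.k := by
        rw [one_le_div (by positivity)]
        exact pow_le_pow_right₀ (by norm_num) hk
      have : C * 1 ≤ C * ff σ.ty := by gcongr; linarith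
      nlinarith
    · positivity
  · intro n σ
    have hup : ff σ.up.ty / (7 / 5) ^ σ.up.k = 5 / (7 / 5) ^ σ.k := by
      unfold St.up
      rcases hp : σ.p with _ | p <;> simp only [ff]
      rw [pow_succ]; field_simp
    have hdn : ff σ.dn.ty / (7 / 5) ^ σ.dn.k = 5 / (7 / 5) ^ σ.k := by
      unfold St.dn
      rcases hp : σ.q with _ | p <;> simp only [ff]
      rw [pow_succ]; field_simp
    have hf : ff σ.fwd.ty / (7 / 5) ^ σ.fwd.k = 7 / (7 / 5) ^ σ.k := rfl
    have key : σ.sum (fun σ => ff σ.ty / (7 / 5) ^ σ.k) ≤ ff σ.ty / (7 / 5) ^ σ.k * (17 / 7) := by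
      have : (0 : ℝ) < ((7 / 5) ^ σ.k)⁻¹ := by positivity
      have e : ∀ a : ℝ, a / (7 / 5) ^ σ.k = a * ((7 / 5) ^ σ.k)⁻¹ := fun a => div_eq_mul_inv _ _
      unfold St.sum
      rcases hty : σ.ty with _ | _ | _ <;> simp only [hf, hup, hdn] <;> simp only [ff_F, ff_U, ff_D, e] <;>
        linarith
    have hs : σ.sum (fun σ => C * ff σ.ty * (7 / 5) ^ m / (7 / 5) ^ σ.k * (17 / 7) ^ n)
        = σ.sum (fun σ => ff σ.ty / (7 / 5) ^ σ.k) * (C * (7 / 5) ^ m * (17 / 7) ^ n) := by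
      unfold St.sum
      rcases σ.ty with _ | _ | _ <;> simp only <;> ring
    simp only [hs]
    have h0 : 0 ≤ C * (7 / 5) ^ m * (17 / 7 : ℝ) ^ n := by positivity
    refine (mul_le_mul_of_nonneg_right key h0).trans (le_of_eq ?_)
    ring

/-- the corrected superharmonic function -/
noncomputable def GG (x : ℝ) (σ : St) : ℝ :=
  Real.exp (((2 * x) ^ (σ.p + σ.q + 1) + (2 * x) ^ σ.o) / (1 - 2 * x)) *
    (hh x σ.p σ.ty + hh x σ.q σ.ty.flip)

lemma exit_le {y : ℝ} (h1 : y < 1) (s o : ℕ) :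
    Real.exp ((y ^ (o + 1) + y ^ (s + 1)) / (1 - y)) * (1 + y ^ o) ≤
    Real.exp ((y ^ (s + 1) + y ^ o) / (1 - y)) := by
  have : (y ^ (s + 1) + y ^ o) / (1 - y) = (y ^ (o + 1) + y ^ (s + 1)) / (1 - y) + y ^ o := by
    have : 1 - y ≠ 0 := by linarith
    field_simp; ring
  rw [this, Real.exp_add]
  gcongr
  rw [add_comm]
  exact Real.add_one_le_exp _

lemma Ty.flip_flip (t : Ty) : t.flip.flip = t := by cases t <;> rfl

def St.flip (σ : St) : St := ⟨σ.ty.flip, σ.q, σ.p, σ.o, σ.k⟩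

lemma GG_up {x : ℝ} (h1 : 2 / 5 ≤ x) (h2 : x ≤ 41 / 100) (σ : St) :
    GG x σ.up ≤ Real.exp (((2 * x) ^ (σ.p + σ.q + 1) + (2 * x) ^ σ.o) / (1 - 2 * x)) *
      ((2 * x) ^ σ.p + gam x * (2 * x) ^ (σ.q + 1)) := by
  have g0 := gam_nonneg h1 h2
  unfold St.up GG
  rcases hp : σ.p with _ | p
  · simp only [hh, Ty.flip, zero_add, pow_zero]
    refine (exit_le (by linarith) σ.q σ.o).trans ?_
    have : 0 ≤ gam x * (2 * x) ^ (σ.q + 1) := by positivity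
    have := Real.exp_pos (((2 * x) ^ (σ.q + 1) + (2 * x) ^ σ.o) / (1 - 2 * x))
    nlinarith
  · simp only [hh, Ty.flip]
    rw [show p + (σ.q + 1) + 1 = p + 1 + σ.q + 1 by ring]

lemma GG_dn {x : ℝ} (h1 : 2 / 5 ≤ x) (h2 : x ≤ 41 / 100) (σ : St) :
    GG x σ.dn ≤ Real.exp (((2 * x) ^ (σ.p + σ.q + 1) + (2 * x) ^ σ.o) / (1 - 2 * x)) *
      ((2 * x) ^ σ.q + gam x * (2 * x) ^ (σ.p + 1)) := by
  have := GG_up h1 h2 σ.flip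
  have e : GG x σ.flip.up = GG x σ.dn := by
    unfold St.up St.dn St.flip GG
    rcases hp : σ.q with _ | p <;> simp only [hh, Ty.flip]
    rw [show p + (σ.p + 1) + 1 = σ.p + 1 + p + 1 by ring, add_comm (gam x * _)]
  rw [e] at this
  simp only [St.flip] at this
  rwa [add_comm σ.p]

lemma GG_fwd {x : ℝ} (h1 : 2 / 5 ≤ x) (h2 : x ≤ 41 / 100) (σ : St) :
    GG x σ.fwd ≤ Real.exp (((2 * x) ^ (σ.p + σ.q + 1) + (2 * x) ^ σ.o) / (1 - 2 * x)) *
      ((2 * x) ^ σ.p + (2 * x) ^ σ.q) := by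
  unfold St.fwd GG
  simp only [hh, Ty.flip]
  have : (2 * x) ^ (σ.o + 1) ≤ (2 * x) ^ σ.o :=
    pow_le_pow_of_le_one (by linarith) (by linarith) (by omega)
  have : 0 < 1 - 2 * x := by linarith
  gcongr

lemma GG_super {x : ℝ} (h1 : 2 / 5 ≤ x) (h2 : x ≤ 41 / 100)
    (h : 1 - 2 * x - 2 * x ^ 2 + 2 * x ^ 3 = 0) (σ : St) :
    x * σ.sum (GG x) ≤ GG x σ := by
  have hx : 0 < x := by linarith
  have a := GG_fwd h1 h2 σ
  have b := GG_up h1 h2 σ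
  have c := GG_dn h1 h2 σ
  have e1 := gam_eq h1 h2
  have e2 := gam_eq2 h1 h2 h
  have hE := Real.exp_pos (((2 * x) ^ (σ.p + σ.q + 1) + (2 * x) ^ σ.o) / (1 - 2 * x))
  unfold St.sum
  conv_rhs => unfold GG
  set E := Real.exp (((2 * x) ^ (σ.p + σ.q + 1) + (2 * x) ^ σ.o) / (1 - 2 * x))
  set g := gam x with hg
  rcases hty : σ.ty with _ | _ | _ <;> simp only [hh, Ty.flip, ← hg]
  · have : E * ((2 * x) ^ σ.p + (2 * x) ^ σ.q) =
        x * (E * ((2 * x) ^ σ.p + (2 * x) ^ σ.q) + E * ((2 * x) ^ σ.p + g * (2 * x) ^ (σ.q + 1)) +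
          E * ((2 * x) ^ σ.q + g * (2 * x) ^ (σ.p + 1))) := by
      linear_combination E * ((2 * x) ^ σ.p + (2 * x) ^ σ.q) * e2
    rw [this]; gcongr
  · have : E * ((2 * x) ^ (σ.p + 1) + g * (2 * x) ^ σ.q) =
        x * (E * ((2 * x) ^ σ.p + (2 * x) ^ σ.q) + E * ((2 * x) ^ σ.p + g * (2 * x) ^ (σ.q + 1)))
        := by
      linear_combination E * ((2 * x) ^ σ.q) * e1
    rw [this]; gcongr
  · have : E * (g * (2 * x) ^ σ.p + (2 * x) ^ (σ.q + 1)) =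
        x * (E * ((2 * x) ^ σ.p + (2 * x) ^ σ.q) + E * ((2 * x) ^ σ.q + g * (2 * x) ^ (σ.p + 1)))
        := by
      linear_combination E * ((2 * x) ^ σ.p) * e1
    rw [this]; gcongr

lemma GG_ge {x : ℝ} (h1 : 2 / 5 ≤ x) (h2 : x ≤ 41 / 100) (σ : St) :
    hh x σ.p σ.ty + hh x σ.q σ.ty.flip ≤ GG x σ := by
  have a := hh_nonneg h1 h2 σ.p σ.ty
  have b := hh_nonneg h1 h2 σ.q σ.ty.flip
  have : (1 : ℝ) ≤ Real.exp (((2 * x) ^ (σ.p + σ.q + 1) + (2 * x) ^ σ.o) / (1 - 2 * x)) := by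
    apply Real.one_le_exp
    have : 0 < 1 - 2 * x := by linarith
    positivity
  unfold GG
  nlinarith

lemma GG_le {x : ℝ} (h1 : 2 / 5 ≤ x) (h2 : x ≤ 41 / 100) (σ : St) :
    GG x σ ≤ 2 * Real.exp (2 / (1 - 2 * x)) := by
  have a := hh_le h1 h2 σ.p σ.ty
  have b := hh_le h1 h2 σ.q σ.ty.flip
  have h4 : ∀ p : ℕ, (2 * x) ^ p ≤ 1 := fun p => pow_le_one₀ (by linarith) (by linarith)
  have h0 : 0 < 1 - 2 * x := by linarith
  unfold GG
  rw [mul_comm]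
  have h5 := h4 (σ.p + σ.q + 1)
  have h6 := h4 σ.o
  apply mul_le_mul
  · linarith
  · gcongr; linarith
  · positivity
  · norm_num

lemma ff_super {x : ℝ} (h1 : 2 / 5 ≤ x) (h2 : x ≤ 41 / 100) (σ : St) :
    x * σ.sum (fun σ => ff σ.ty) ≤ ff σ.ty + 2 * GG x σ := by
  have hG := GG_ge h1 h2 σ
  have a := hh_nonneg h1 h2 σ.p σ.ty
  have b := hh_nonneg h1 h2 σ.q σ.ty.flip
  have hup : ff σ.up.ty ≤ 7 ∧ (σ.p ≠ 0 → ff σ.up.ty = 5) := by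
    unfold St.up
    rcases hp : σ.p with _ | p <;> norm_num [ff]
  have hdn : ff σ.dn.ty ≤ 7 ∧ (σ.q ≠ 0 → ff σ.dn.ty = 5) := by
    unfold St.dn
    rcases hp : σ.q with _ | p <;> norm_num [ff]
  have hf : ff σ.fwd.ty = 7 := rfl
  obtain ⟨u1, u2⟩ := hup
  obtain ⟨d1, d2⟩ := hdn
  unfold St.sum
  rcases hty : σ.ty with _ | _ | _ <;> simp only [hty, hf, Ty.flip] at a b hG ⊢
  · by_cases hp : σ.p = 0
    · have : hh x σ.p .F = 1 := by simp [hp, hh]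
      simp only [ff_F, ff_U, ff_D]; nlinarith
    · by_cases hq : σ.q = 0
      · have : hh x σ.q .F = 1 := by simp [hq, hh]
        simp only [ff_F, ff_U, ff_D]; nlinarith
      · rw [u2 hp, d2 hq]; simp only [ff_F, ff_U, ff_D]; linarith
  · by_cases hp : σ.p = 0
    · have : hh x σ.p .U = 2 * x := by simp [hp, hh]
      simp only [ff_F, ff_U, ff_D]; nlinarith
    · rw [u2 hp]; simp only [ff_F, ff_U, ff_D]; linarith
  · by_cases hq : σ.q = 0
    · have : hh x σ.q .U = 2 * x := by simp [hq, hh]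
      simp only [ff_F, ff_U, ff_D]; nlinarith
    · rw [d2 hq]; simp only [ff_F, ff_U, ff_D]; linarith

theorem upper {x : ℝ} (h1 : 2 / 5 ≤ x) (h2 : x ≤ 41 / 100)
    (h : 1 - 2 * x - 2 * x ^ 2 + 2 * x ^ 3 = 0) (n : ℕ) (z l σ) (hI : I z l σ) :
    N n (fun _ => 1) z l ≤ (4 * Real.exp (2 / (1 - 2 * x)) * n + 7) * (1 / x) ^ n := by
  have hx : 0 < x := by linarith
  have key : N n (fun _ => 1) z l ≤ (2 * n * GG x σ + ff σ.ty) * (1 / x) ^ n := by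
    refine N_le (V := fun n σ => (2 * n * GG x σ + ff σ.ty) * (1 / x) ^ n) ?_ ?_ n z l σ hI
    · intro z l σ _
      have hf : 5 ≤ ff σ.ty := by cases σ.ty <;> norm_num [ff]
      simp; linarith
    · intro n σ
      have hs : σ.sum (fun σ => (2 * n * GG x σ + ff σ.ty) * (1 / x) ^ n)
          = (2 * n * σ.sum (GG x) + σ.sum (fun σ => ff σ.ty)) * (1 / x) ^ n := by
        unfold St.sum
        rcases σ.ty with _ | _ | _ <;> simp only <;> ring
      simp only [hs]
      rw [pow_succ, mul_comm ((1 / x) ^ n) (1 / x), ← mul_assoc]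
      have : 0 ≤ (1 / x) ^ n := by positivity
      refine mul_le_mul_of_nonneg_right ?_ this
      rw [mul_one_div, le_div_iff₀ hx]
      have a := GG_super h1 h2 h σ
      have b := ff_super h1 h2 σ
      have := mul_le_mul_of_nonneg_left a (show (0 : ℝ) ≤ 2 * n by positivity)
      push_cast
      linarith
  refine key.trans ?_
  have : 0 ≤ (1 / x) ^ n := by positivity
  refine mul_le_mul_of_nonneg_right ?_ this
  have := mul_le_mul_of_nonneg_left (GG_le h1 h2 σ) (show (0 : ℝ) ≤ 2 * n by positivity)
  have hf : ff σ.ty ≤ 7 := by cases σ.ty <;> norm_num [ff]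
  linarith


/-! ### Counting prudent paths by lists -/

lemma N_add (i n : ℕ) (φ : List (ℤ × ℤ) → ℝ) (ψ : List (ℤ × ℤ) → ℝ)
    (h : ∀ z l, ψ (z :: l) = N n φ z l) : ∀ z l, N (i + n) φ z l = N i ψ z l := by
  induction i with
  | zero => intro z l; rw [Nat.zero_add, N, h]
  | succ i ih =>
    intro z l
    rw [show i + 1 + n = (i + n) + 1 by ring, N, N]
    simp only [ih]

lemma N_drop (n : ℕ) : ∀ (ψ : List (ℤ × ℤ) → ℝ) (z l),
    N n (fun l => ψ (l.drop n)) z l = ψ (z :: l) * N n (fun _ => 1) z l := by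
  induction n with
  | zero => intro ψ z l; simp [N]
  | succ n ih =>
    intro ψ z l
    rw [N, N, Finset.mul_sum]
    refine Finset.sum_congr rfl fun s _ => ?_
    have := ih (fun l => ψ (l.drop 1)) (z + s) (z :: l)
    simp only [List.drop_drop] at this
    rw [this, List.drop_one, List.tail_cons]
    simp

/-- list of sites up to time `t`, newest first -/
def pre (L : ℕ) (π : Fin (L + 1) → ℤ × ℤ) : ℕ → List (ℤ × ℤ)
  | 0 => [π 0]
  | t + 1 => π ⟨min (t + 1) L, by omega⟩ :: pre L π t

lemma mem_pre (L : ℕ) (π : Fin (L + 1) → ℤ × ℤ) (t : ℕ) (ht : t ≤ L) (w : ℤ × ℤ) :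
    w ∈ pre L π t ↔ ∃ i : Fin (L + 1), i.1 ≤ t ∧ π i = w := by
  induction t with
  | zero =>
    simp only [pre, List.mem_singleton]
    constructor
    · rintro rfl; exact ⟨0, by simp, rfl⟩
    · rintro ⟨i, hi, rfl⟩
      rw [show i = 0 from Fin.ext (by simpa using hi)]
  | succ t ih =>
    simp only [pre, List.mem_cons, ih (by omega)]
    constructor
    · rintro (rfl | ⟨i, hi, rfl⟩)
      · exact ⟨_, by simp, rfl⟩
      · exact ⟨i, by omega, rfl⟩
    · rintro ⟨i, hi, rfl⟩
      rcases Nat.lt_or_ge t i.1 with h | h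
      · left; congr 1; apply Fin.ext; simp; omega
      · exact Or.inr ⟨i, h, rfl⟩

lemma drop_pre (L : ℕ) (π : Fin (L + 1) → ℤ × ℤ) (n t : ℕ) :
    (pre L π (t + n)).drop n = pre L π t := by
  induction n with
  | zero => rfl
  | succ n ih =>
    rw [← add_assoc, pre, List.drop_succ_cons, ih]

lemma pre_init (n : ℕ) (π : Fin (n + 1 + 1) → ℤ × ℤ) (t : ℕ) (ht : t ≤ n) :
    pre (n + 1) π t = pre n (Fin.init π) t := by
  induction t with
  | zero => rfl
  | succ t ih =>
    rw [pre, pre, ih (by omega)]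
    congr 1
    simp only [Fin.init]
    congr 1
    apply Fin.ext; simp; omega

lemma pre_head (n : ℕ) (π : Fin (n + 1) → ℤ × ℤ) :
    ∃ l, pre n π n = π (Fin.last n) :: l := by
  cases n with
  | zero => exact ⟨[], rfl⟩
  | succ n => exact ⟨_, by rw [pre]; congr 2; apply Fin.ext; simp⟩

lemma prudent_succ (n : ℕ) (π : Fin (n + 1 + 1) → ℤ × ℤ) :
    π ∈ prudentSet (n + 1) ↔ Fin.init π ∈ prudentSet n ∧
      IsStep (π (Fin.last _) - Fin.init π (Fin.last n)) ∧
      ∀ k : ℕ, 1 ≤ k → Fin.init π (Fin.last n) +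
        (k : ℤ) • (π (Fin.last _) - Fin.init π (Fin.last n)) ∉ pre n (Fin.init π) n := by
  constructor
  · rintro ⟨h0, h⟩
    refine ⟨⟨h0, fun i => ⟨(h i.castSucc).1, fun k hk j hj => ?_⟩⟩, (h (Fin.last n)).1, ?_⟩
    · exact (h i.castSucc).2 k hk j.castSucc hj
    · intro k hk hm
      obtain ⟨j, hj', hj⟩ := (mem_pre n _ n le_rfl _).1 hm
      exact (h (Fin.last n)).2 k hk j.castSucc (by simp only [Fin.le_def]; simp; omega) hj.symm
  · rintro ⟨⟨h0, h1⟩, h2, h3⟩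
    refine ⟨h0, fun i => ?_⟩
    refine Fin.lastCases ⟨h2, fun k hk j hj => ?_⟩ (fun i => ⟨(h1 i).1, fun k hk j hj => ?_⟩) i
    · have hj' : j.1 ≤ n := hj
      intro e
      exact h3 k hk ((mem_pre n _ n le_rfl _).2 ⟨⟨j.1, by omega⟩, hj', e.symm⟩)
    · have hj' : j.1 ≤ i.1 := hj
      exact (h1 i).2 k hk ⟨j.1, by omega⟩ hj'

open Classical in
noncomputable def Om : (n : ℕ) → Finset (Fin (n + 1) → ℤ × ℤ)
  | 0 => {fun _ => (0, 0)}
  | n + 1 => ((Om n ×ˢ dirs).filter (fun a => ∀ k : ℕ, 1 ≤ k →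
      a.1 (Fin.last n) + (k : ℤ) • a.2 ∉ pre n a.1 n)).image
      (fun a => (Fin.snoc a.1 (a.1 (Fin.last n) + a.2) : Fin (n + 1 + 1) → ℤ × ℤ))

lemma mem_Om (n : ℕ) (π : Fin (n + 1) → ℤ × ℤ) : π ∈ Om n ↔ π ∈ prudentSet n := by
  induction n with
  | zero =>
    simp only [Om, Finset.mem_singleton, prudentSet, Set.mem_setOf_eq]
    constructor
    · rintro rfl; exact ⟨rfl, fun i => i.elim0⟩
    · rintro ⟨h, -⟩
      funext i
      rw [show i = 0 from Fin.ext (by omega), h]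
  | succ n ih =>
    rw [prudent_succ]
    simp only [Om, Finset.mem_image, Finset.mem_filter, Finset.mem_product]
    constructor
    · rintro ⟨⟨a, s⟩, ⟨⟨h1, h2⟩, h3⟩, rfl⟩
      simp only [Fin.init_snoc, Fin.snoc_last, add_sub_cancel_left]
      exact ⟨(ih a).1 h1, (mem_dirs s).1 h2, h3⟩
    · rintro ⟨h1, h2, h3⟩
      refine ⟨(Fin.init π, π (Fin.last _) - Fin.init π (Fin.last n)), ⟨⟨(ih _).2 h1,
        (mem_dirs _).2 h2⟩, h3⟩, ?_⟩
      simp only [add_sub_cancel]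
      exact Fin.snoc_init_self π

lemma sum_Om (n : ℕ) : ∀ φ : List (ℤ × ℤ) → ℝ,
    ∑ π ∈ Om n, φ (pre n π n) = N n φ 0 [] := by
  induction n with
  | zero =>
    intro φ
    simp [Om, pre, N]
    rfl
  | succ n ih =>
    intro φ
    have hinj : ∀ a b : (Fin (n + 1) → ℤ × ℤ) × (ℤ × ℤ),
        (Fin.snoc a.1 (a.1 (Fin.last n) + a.2) : Fin (n + 1 + 1) → ℤ × ℤ) =
        Fin.snoc b.1 (b.1 (Fin.last n) + b.2) → a = b := by
      intro a b e
      have e1 := congrArg Fin.init e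
      have e2 := congrFun e (Fin.last _)
      simp only [Fin.init_snoc, Fin.snoc_last] at e1 e2
      rw [e1] at e2
      exact Prod.ext e1 (add_left_cancel e2)
    rw [Om, Finset.sum_image (fun a _ b _ e => hinj a b e), Finset.sum_filter,
      Finset.sum_product]
    have hψ := N_add n 1 φ (fun l => match l with | [] => 0 | z :: l => N 1 φ z l)
      (fun z l => rfl) 0 []
    rw [hψ, ← ih]
    refine Finset.sum_congr rfl fun π _ => ?_
    obtain ⟨l, hl⟩ := pre_head n π
    simp only [hl, N]
    refine Finset.sum_congr rfl fun s _ => ?_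
    have : pre (n + 1) (Fin.snoc π (π (Fin.last n) + s)) (n + 1) =
        (π (Fin.last n) + s) :: π (Fin.last n) :: l := by
      rw [pre, pre_init _ _ _ le_rfl, Fin.init_snoc, hl]
      congr 1
      have : (⟨min (n + 1) (n + 1), by omega⟩ : Fin (n + 1 + 1)) = Fin.last (n + 1) :=
        Fin.ext (by simp)
      rw [this, Fin.snoc_last]
    rw [this]
    have hiff : (∀ k : ℕ, 1 ≤ k → π (Fin.last n) + (k : ℤ) • s ∉ pre n π n) ↔
        ok (π (Fin.last n)) l s := by
      rw [hl]; rfl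
    by_cases ho : ok (π (Fin.last n)) l s
    · rw [if_pos (hiff.2 ho), if_pos ho]
    · rw [if_neg (fun q => ho (hiff.1 q)), if_neg ho]

lemma card_prudent (n : ℕ) : (Nat.card ↥(prudentSet n) : ℝ) = N n (fun _ => 1) 0 [] := by
  rw [← sum_Om]
  have : prudentSet n = (Om n : Set _) := by ext π; simp [mem_Om]
  rw [this]
  simp

open Classical in
lemma card_inter_le (n : ℕ) (A : Set (Fin (n + 1) → ℤ × ℤ)) (φ : List (ℤ × ℤ) → ℝ)
    (hφ : ∀ l, 0 ≤ φ l) (h : ∀ π ∈ prudentSet n, π ∈ A → 1 ≤ φ (pre n π n)) :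
    (Nat.card ↥(A ∩ prudentSet n) : ℝ) ≤ N n φ 0 [] := by
  rw [← sum_Om]
  have : A ∩ prudentSet n = ((Om n).filter (· ∈ A) : Finset _) := by
    ext π; simp [mem_Om, and_comm]
  rw [this]
  simp only [Nat.card_eq_fintype_card, Fintype.card_coe, SetLike.coe_sort_coe]
  rw [Finset.card_eq_sum_ones, Finset.sum_filter]
  push_cast
  refine Finset.sum_le_sum fun π hπ => ?_
  split_ifs with hA
  · simpa using h π ((mem_Om _ _).1 hπ) hA
  · simpa using hφ _

/-! ### Excursion times versus `kc` -/

lemma card_lt_iff (L : ℕ) (f : Fin (L + 1) → ℤ) (t : ℕ) (ht : t + 1 ≤ L) :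
    ((Finset.Iic (⟨min t L, by omega⟩ : Fin (L + 1))).image f).card <
      ((Finset.Iic (⟨min (t + 1) L, by omega⟩ : Fin (L + 1))).image f).card ↔
    ∀ i : Fin (L + 1), i.1 ≤ t → f i ≠ f ⟨min (t + 1) L, by omega⟩ := by
  have e : (Finset.Iic (⟨min (t + 1) L, by omega⟩ : Fin (L + 1))) =
      insert ⟨min (t + 1) L, by omega⟩ (Finset.Iic (⟨min t L, by omega⟩ : Fin (L + 1))) := by
    ext i
    simp only [Finset.mem_Iic, Finset.mem_insert, Fin.le_def, Fin.ext_iff]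
    omega
  rw [e, Finset.image_insert]
  constructor
  · intro h i hi he
    rw [Finset.insert_eq_of_mem] at h
    · exact lt_irrefl _ h
    · rw [← he]
      apply Finset.mem_image_of_mem
      simp only [Finset.mem_Iic, Fin.le_def]; omega
  · intro h
    rw [Finset.card_insert_of_notMem]
    · omega
    · intro hm
      obtain ⟨i, hi, he⟩ := Finset.mem_image.1 hm
      simp only [Finset.mem_Iic, Fin.le_def] at hi
      exact h i (by omega) he

lemma height_lt_iff (L : ℕ) (π : Fin (L + 1) → ℤ × ℤ) (t : ℕ) (ht : t + 1 ≤ L) :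
    heightAt L π t < heightAt L π (t + 1) ↔
    ∀ w ∈ pre L π t, w.2 ≠ (π ⟨min (t + 1) L, by omega⟩).2 := by
  unfold heightAt
  rw [card_lt_iff L (fun i => (π i).2) t ht]
  simp only [mem_pre L π t (by omega)]
  constructor
  · rintro h w ⟨i, hi, rfl⟩; exact h i hi
  · intro h i hi; exact h _ ⟨i, hi, rfl⟩

lemma width_lt_iff (L : ℕ) (π : Fin (L + 1) → ℤ × ℤ) (t : ℕ) (ht : t + 1 ≤ L) :
    widthAt L π t < widthAt L π (t + 1) ↔
    ∀ w ∈ pre L π t, w.1 ≠ (π ⟨min (t + 1) L, by omega⟩).1 := by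
  unfold widthAt
  rw [card_lt_iff L (fun i => (π i).1) t ht]
  simp only [mem_pre L π t (by omega)]
  constructor
  · rintro h w ⟨i, hi, rfl⟩; exact h i hi
  · intro h i hi; exact h _ ⟨i, hi, rfl⟩

lemma pre_ne_nil (L : ℕ) (π : Fin (L + 1) → ℤ × ℤ) (t : ℕ) : pre L π t ≠ [] := by
  cases t <;> simp [pre]

noncomputable def fE (L : ℕ) (π : Fin (L + 1) → ℤ × ℤ) (i : ℕ) : ℕ → ℕ :=
  if Even i then heightAt L π else widthAt L π

lemma kc_pre_succ (L : ℕ) (π : Fin (L + 1) → ℤ × ℤ) (t : ℕ) (ht : t + 1 ≤ L) :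
    (fE L π (kc (pre L π t)) t < fE L π (kc (pre L π t)) (t + 1) ∧
      kc (pre L π (t + 1)) = kc (pre L π t) + 1) ∨
    (¬ fE L π (kc (pre L π t)) t < fE L π (kc (pre L π t)) (t + 1) ∧
      kc (pre L π (t + 1)) = kc (pre L π t)) := by
  rw [pre, kc]
  simp only [pre_ne_nil, ne_eq, not_false_eq_true, true_and]
  unfold fE
  by_cases he : Even (kc (pre L π t))
  · simp only [he, if_true, height_lt_iff L π t ht]
    split_ifs with h
    · exact Or.inl ⟨h, rfl⟩
    · exact Or.inr ⟨h, rfl⟩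
  · simp only [he, if_false, width_lt_iff L π t ht]
    split_ifs with h
    · exact Or.inl ⟨h, rfl⟩
    · exact Or.inr ⟨h, rfl⟩

lemma not_both (L : ℕ) (π : Fin (L + 1) → ℤ × ℤ) (hπ : π ∈ prudentSet L) (t : ℕ)
    (ht : t + 1 ≤ L) :
    ¬ (heightAt L π t < heightAt L π (t + 1) ∧ widthAt L π t < widthAt L π (t + 1)) := by
  rw [height_lt_iff L π t ht, width_lt_iff L π t ht]
  rintro ⟨h1, h2⟩
  have hs := (hπ.2 ⟨t, by omega⟩).1
  have hm : π ⟨t, by omega⟩ ∈ pre L π t := (mem_pre L π t (by omega) _).2 ⟨_, le_rfl, rfl⟩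
  have e : (⟨min (t + 1) L, by omega⟩ : Fin (L + 1)) = (⟨t, by omega⟩ : Fin L).succ :=
    Fin.ext (by simp; omega)
  have e' : (⟨t, by omega⟩ : Fin (L + 1)) = (⟨t, by omega⟩ : Fin L).castSucc := rfl
  have a := h1 _ hm
  have b := h2 _ hm
  rw [e, e'] at a b
  rcases hs with h | h | h | h <;> (obtain ⟨h', h''⟩ := Prod.ext_iff.1 h
                                    simp only [Prod.fst_sub, Prod.snd_sub] at h' h''
                                    omega)

lemma nextTime_eq (L : ℕ) (f : ℕ → ℕ) (a t : ℕ) (hat : a ≤ t) (ht : t + 1 ≤ L)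
    (h : f t < f (t + 1)) (hn : ∀ s, a < s → s ≤ t → ¬ f (s - 1) < f s) :
    nextTime L f a = some t := by
  classical
  have hex : ∃ t : ℕ, a < t ∧ t ≤ L ∧ f (t - 1) < f t := ⟨t + 1, by omega, ht, by simpa using h⟩
  unfold nextTime
  rw [dif_pos hex]
  congr 1
  have : Nat.find hex = t + 1 := by
    rw [Nat.find_eq_iff]
    refine ⟨⟨by omega, ht, by simpa using h⟩, fun s hs hc => hn s hc.1 (by omega) hc.2.2⟩
  omega

lemma exc_inv (L : ℕ) (π : Fin (L + 1) → ℤ × ℤ) (hπ : π ∈ prudentSet L) (t : ℕ) (ht : t ≤ L) :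
    ∃ a, excTime L π (kc (pre L π t)) = some a ∧ a ≤ t ∧
      (0 < kc (pre L π t) → a < t) ∧
      ∀ s, a < s → s ≤ t → ¬ fE L π (kc (pre L π t)) (s - 1) < fE L π (kc (pre L π t)) s := by
  induction t with
  | zero =>
    have : kc (pre L π 0) = 0 := by simp [pre, kc]
    rw [this]
    exact ⟨0, rfl, le_rfl, by simp, by omega⟩
  | succ t ih =>
    obtain ⟨a, h1, h2, h3, h4⟩ := ih (by omega)
    rcases kc_pre_succ L π t ht with ⟨h5, h6⟩ | ⟨h5, h6⟩
    · rw [h6]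
      refine ⟨t, ?_, by omega, by omega, ?_⟩
      · rw [excTime, h1]
        exact nextTime_eq L _ a t h2 ht h5 h4
      · intro s hs1 hs2
        obtain rfl : s = t + 1 := by omega
        have := not_both L π hπ t ht
        rw [Nat.add_sub_cancel]
        unfold fE at h5 ⊢
        by_cases he : Even (kc (pre L π t))
        · rw [if_pos he] at h5
          rw [if_neg (by rw [Nat.even_add_one]; simpa using he)]
          exact fun h => this ⟨h5, h⟩
        · rw [if_neg he] at h5
          rw [if_pos (by rw [Nat.even_add_one]; simpa using he)]
          exact fun h => this ⟨h, h5⟩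
    · rw [h6]
      refine ⟨a, h1, by omega, fun h => by have := h3 h; omega, ?_⟩
      intro s hs1 hs2
      rcases Nat.lt_or_ge t s with h | h
      · obtain rfl : s = t + 1 := by omega
        simpa using h5
      · exact h4 s hs1 h

lemma nextTime_bd (L : ℕ) (f : ℕ → ℕ) (a b : ℕ) (h : nextTime L f a = some b) :
    a ≤ b ∧ b ≤ L := by
  classical
  unfold nextTime at h
  split_ifs at h with hex
  have hs := Nat.find_spec hex
  simp only [Option.some.injEq] at h
  omega

lemma excTime_le (L : ℕ) (π : Fin (L + 1) → ℤ × ℤ) (i a : ℕ) (h : excTime L π i = some a) :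
    a ≤ L := by
  cases i with
  | zero => simp [excTime] at h; omega
  | succ i =>
    rw [excTime, Option.bind_eq_some_iff] at h
    obtain ⟨b, -, h⟩ := h
    exact (nextTime_bd _ _ _ _ h).2

lemma excEnd_mono (L : ℕ) (π : Fin (L + 1) → ℤ × ℤ) : Monotone (excEnd L π) := by
  refine monotone_nat_of_le_succ fun i => ?_
  unfold excEnd
  rcases h : excTime L π (i + 1) with _ | b
  · rcases h' : excTime L π i with _ | a
    · simp
    · simpa using excTime_le L π i a h'
  · rw [excTime, Option.bind_eq_some_iff] at h
    obtain ⟨a, h1, h2⟩ := h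
    rw [h1]
    simpa using (nextTime_bd _ _ _ _ h2).1

lemma sum_excLen (L : ℕ) (π : Fin (L + 1) → ℤ × ℤ) (M : ℕ) :
    ∑ i ∈ Finset.Icc 1 M, excLen L π i = excEnd L π M := by
  induction M with
  | zero => simp [excEnd, excTime]
  | succ M ih =>
    rw [Finset.sum_Icc_succ_top (by omega), ih, excLen, Nat.add_sub_cancel]
    have := excEnd_mono L π (Nat.le_succ M)
    simp only [Nat.succ_eq_add_one] at this
    omega

lemma excEnd_le (L : ℕ) (π : Fin (L + 1) → ℤ × ℤ) (M : ℕ) : excEnd L π M ≤ L := by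
  unfold excEnd
  rcases h : excTime L π M with _ | a
  · simp
  · simpa using excTime_le L π M a h

lemma bad_kc (L : ℕ) (π : Fin (L + 1) → ℤ × ℤ) (hπ : π ∈ prudentSet L) (M m t : ℕ) (hM : M ≤ m)
    (ht : t ≤ L) (h : t ≤ ∑ i ∈ Finset.Icc 1 M, excLen L π i) : kc (pre L π t) ≤ m := by
  rw [sum_excLen] at h
  by_contra hc
  obtain ⟨a, h1, -, h3, -⟩ := exc_inv L π hπ t ht
  have := excEnd_mono L π (show M ≤ kc (pre L π t) by omega)
  have h4 : excEnd L π (kc (pre L π t)) = a := by unfold excEnd; rw [h1]; rfl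
  have := h3 (by omega)
  omega


/-! ### Conclusion -/

lemma card_dirs : dirs.card = 4 := by
  unfold dirs; decide

open Classical in
lemma numer {x : ℝ} (h1 : 2/5 ≤ x) (h2 : x ≤ 41/100) (h : 1-2*x-2*x^2+2*x^3=0)
    (n t m : ℕ) (ht : 1 ≤ t) :
    N (t + n) (fun l => if kc (l.drop n) ≤ m then (1:ℝ) else 0) 0 [] ≤
      28 * ((4*Real.exp (2/(1-2*x))*n+7)*(1/x)^n) * (7/5)^m * (17/7)^t := by
  set C : ℝ := (4*Real.exp (2/(1-2*x))*n+7)*(1/x)^n with hC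
  have hx : 0 < x := by linarith
  have hC0 : 0 ≤ C := by positivity
  rw [N_add t n _ (fun l => match l with
    | [] => 0
    | z :: l => N n (fun l => if kc (l.drop n) ≤ m then (1:ℝ) else 0) z l) (fun z l => rfl)]
  obtain ⟨t, rfl⟩ : ∃ t', t = t' + 1 := ⟨t - 1, by omega⟩
  rw [N]
  have key : ∀ s ∈ dirs, (if ok 0 [] s then N t (fun l => match l with
    | [] => 0
    | z :: l => N n (fun l => if kc (l.drop n) ≤ m then (1:ℝ) else 0) z l) (0 + s) [0] else 0)
      ≤ 7 * C * (7/5)^m * (17/7)^(t+1) := by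
    intro s hs
    obtain ⟨ho, k, hk, hI⟩ := inv_start s hs
    rw [if_pos ho]
    have hb := prefixBound (m := m) (C := C) (φ := fun l => match l with
      | [] => 0
      | z :: l => N n (fun l => if kc (l.drop n) ≤ m then (1:ℝ) else 0) z l) hC0 ?_ t (0 + s) [0]
        _ hI
    · refine hb.trans ?_
      simp only [ff_F]
      have e1 : (1:ℝ) ≤ (7/5)^k := one_le_pow₀ (by norm_num)
      have e2 : C * 7 * (7/5)^m/(7/5)^k ≤ C * 7 * (7/5)^m := div_le_self (by positivity) e1
      calc _ ≤ C * 7 * (7/5)^m * (17/7)^t := by gcongr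
        _ ≤ C * 7 * (7/5)^m * (17/7)^(t+1) := by
          gcongr
          · norm_num
          · omega
        _ = _ := by ring
    · intro z l σ hσ
      obtain ⟨u, v, hInv⟩ := id hσ
      show N n (fun l => if kc (l.drop n) ≤ m then (1:ℝ) else 0) z l ≤ _
      rw [N_drop n (fun l => if kc l ≤ m then (1:ℝ) else 0) z l, hInv.hk]
      have := upper h1 h2 h n z l σ hσ
      split_ifs
      · rw [one_mul]; exact this
      · simp
  refine (Finset.sum_le_card_nsmul _ _ _ key).trans (le_of_eq ?_)
  rw [card_dirs, nsmul_eq_mul]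
  push_cast
  ring

open Classical in
lemma denom {x : ℝ} (h1 : 2/5 ≤ x) (h2 : x ≤ 41/100) (h : 1-2*x-2*x^2+2*x^3=0)
    (L : ℕ) (hL : 1 ≤ L) : x * (1/x)^L ≤ N L (fun _ => (1:ℝ)) 0 [] := by
  have hx : 0 < x := by linarith
  obtain ⟨n, rfl⟩ : ∃ t', L = t' + 1 := ⟨L - 1, by omega⟩
  rw [N]
  have key : ∀ s ∈ dirs, (1/x)^n ≤
      (if ok 0 [] s then N n (fun _ => (1:ℝ)) (0 + s) [0] else 0) := by
    intro s hs
    obtain ⟨ho, k, hk, hI⟩ := inv_start s hs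
    rw [if_pos ho]
    have := lower h1 h2 h n (0 + s) [0] _ hI
    simpa [hh] using this
  have := Finset.card_nsmul_le_sum _ _ _ key
  rw [card_dirs, nsmul_eq_mul] at this
  refine le_trans ?_ this
  rw [pow_succ]
  have : 0 < (1/x)^n := by positivity
  field_simp
  push_cast
  nlinarith

lemma prob_le {x : ℝ} (h1 : 2/5 ≤ x) (h2 : x ≤ 41/100) (h : 1-2*x-2*x^2+2*x^3=0)
    (L t m : ℕ) (ht : 1 ≤ t) (htL : t ≤ L) (A : Set (Fin (L + 1) → ℤ × ℤ))
    (hA : ∀ π ∈ prudentSet L, π ∈ A → kc (pre L π t) ≤ m) :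
    probUnif L A ≤ 28 / x * (4*Real.exp (2/(1-2*x))*L+7) * (7/5)^m * (17/7*x)^t := by
  have hx : 0 < x := by linarith
  obtain ⟨n, rfl⟩ := Nat.exists_eq_add_of_le htL
  have hn := card_inter_le (t + n) A (fun l => if kc (l.drop n) ≤ m then (1:ℝ) else 0)
    (fun l => by split_ifs <;> norm_num) (fun π hπ hπA => by
      rw [drop_pre, if_pos (hA π hπ hπA)])
  have hn := hn.trans (numer h1 h2 h n t m ht)
  have hd := denom h1 h2 h (t + n) (by omega)
  rw [← card_prudent] at hd
  have hpos : 0 < x * (1/x)^(t+n) := by positivity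
  unfold probUnif
  rw [div_le_iff₀ (hpos.trans_le hd)]
  refine hn.trans ?_
  have hc : (n:ℝ) ≤ ((t + n : ℕ) : ℝ) := by exact_mod_cast Nat.le_add_left n t
  calc 28 * ((4*Real.exp (2/(1-2*x))*n+7)*(1/x)^n) * (7/5)^m * (17/7)^t
      ≤ 28 * ((4*Real.exp (2/(1-2*x))*((t + n : ℕ) : ℝ)+7)*(1/x)^n) * (7/5)^m * (17/7)^t := by
        gcongr
    _ = 28 / x * (4*Real.exp (2/(1-2*x))*((t + n : ℕ) : ℝ)+7) * (7/5)^m * (17/7*x)^t *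
          (x * (1/x)^(t+n)) := by
        have e : x^t * (1/x)^t = 1 := by rw [← mul_pow, mul_one_div_cancel hx.ne', one_pow]
        rw [mul_pow, pow_add]
        generalize (4*Real.exp (2/(1-2*x))*((t + n : ℕ) : ℝ)+7) = B
        calc _ = 28 * (B * (1/x)^n) * (7/5)^m * (17/7)^t * 1 * 1 := by ring
          _ = 28 * (B * (1/x)^n) * (7/5)^m * (17/7)^t * (x^t * (1/x)^t) * (1 / x * x) := by
            rw [e, one_div_mul_cancel hx.ne']
          _ = _ := by ring
    _ ≤ _ := by gcongr

lemma final_bound {x : ℝ} (h1 : 2/5 ≤ x) (h2 : x ≤ 41/100) (E δ : ℝ) (hE : 0 ≤ E)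
    (hδ : 0 < δ) (L t m : ℕ) (hL : 1 ≤ L) (hm : (m:ℝ) ≤ δ * Real.log L)
    (ht : 1 * Real.log L ^ 2 ≤ t) :
    28 / x * (4*E*L+7) * (7/5)^m * (17/7*x)^t ≤
      28 / x * (4*E+7) * Real.exp (Real.log L * (1 + δ + (-(3/700)) * Real.log L)) := by
  have hx : 0 < x := by linarith
  have hL' : (1:ℝ) ≤ L := by exact_mod_cast hL
  have a1 : 4*E*L+7 ≤ (4*E+7) * Real.exp (Real.log L) := by
    rw [Real.exp_log (by linarith)]; nlinarith
  have a2 : ((7:ℝ)/5)^m ≤ Real.exp (δ * Real.log L) := by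
    calc ((7:ℝ)/5)^m ≤ (Real.exp 1)^m := by
          gcongr
          have := Real.add_one_le_exp (1:ℝ); linarith
      _ = Real.exp m := by rw [← Real.exp_nat_mul, mul_one]
      _ ≤ _ := Real.exp_le_exp.2 hm
  have a3 : (17/7*x)^t ≤ Real.exp (-(3/700) * Real.log L ^ 2) := by
    calc (17/7*x)^t ≤ (Real.exp (-(3/700)))^t := by
          gcongr
          have := Real.add_one_le_exp (-(3/700):ℝ); linarith
      _ = Real.exp (t * -(3/700)) := by rw [← Real.exp_nat_mul]
      _ ≤ _ := Real.exp_le_exp.2 (by nlinarith)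
  calc 28 / x * (4*E*L+7) * (7/5)^m * (17/7*x)^t
      ≤ 28 / x * ((4*E+7) * Real.exp (Real.log L)) * Real.exp (δ * Real.log L) *
        Real.exp (-(3/700) * Real.log L ^ 2) := by gcongr
    _ = 28 / x * (4*E+7) * (Real.exp (Real.log L) * Real.exp (δ * Real.log L) *
        Real.exp (-(3/700) * Real.log L ^ 2)) := by ring
    _ = _ := by
      rw [← Real.exp_add, ← Real.exp_add]; ring_nf

lemma main_tendsto (δ : ℝ) (hδ : 0 < δ) :
    Filter.Tendsto (fun L : ℕ =>
      probUnif L {π |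
        1 * Real.log L ^ 2 ≤
          ((∑ i ∈ Finset.Icc 1 (min (numExc L π) ⌊δ * Real.log L⌋₊),
            excLen L π i : ℕ) : ℝ)}) Filter.atTop (nhds 0) := by
  obtain ⟨x, h1, h2, h⟩ := exists_x
  have hlog : Filter.Tendsto (fun L : ℕ => Real.log L) Filter.atTop Filter.atTop :=
    Real.tendsto_log_atTop.comp tendsto_natCast_atTop_atTop
  have hlim : Filter.Tendsto (fun L : ℕ => 28 / x * (4*Real.exp (2/(1-2*x))+7) *
      Real.exp (Real.log L * (1 + δ + (-(3/700)) * Real.log L))) Filter.atTop (nhds 0) := by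
    rw [show (0:ℝ) = 28 / x * (4*Real.exp (2/(1-2*x))+7) * 0 by simp]
    refine Filter.Tendsto.const_mul _ (Real.tendsto_exp_atBot.comp ?_)
    refine hlog.atTop_mul_atBot₀ ?_
    exact Filter.tendsto_atBot_add_const_left _ _ (hlog.const_mul_atTop_of_neg (by norm_num))
  have hlo : ∀ᶠ L : ℕ in Filter.atTop, ⌈1 * Real.log L ^ 2⌉₊ ≤ L := by
    have := (Real.isLittleO_pow_log_id_atTop (n := 2)).bound (c := 1) one_pos
    filter_upwards [tendsto_natCast_atTop_atTop.eventually this] with L hL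
    refine Nat.ceil_le.2 ?_
    rw [one_mul]
    simp only [id, Real.norm_eq_abs, one_mul, Nat.abs_cast] at hL
    exact (le_abs_self _).trans hL
  refine squeeze_zero' (Filter.Eventually.of_forall fun L => by unfold probUnif; positivity) ?_ hlim
  filter_upwards [hlo, hlog.eventually_ge_atTop 1, Filter.eventually_ge_atTop 1] with L hL hL1 hL2
  have hle := prob_le h1 h2 h L ⌈1 * Real.log L ^ 2⌉₊ ⌊δ * Real.log L⌋₊
    (Nat.one_le_iff_ne_zero.2 (Nat.ceil_pos.2 (by positivity)).ne') hL _
    (fun π hπ hπA => bad_kc L π hπ _ _ _ (min_le_right (numExc L π) _) hL (Nat.ceil_le.2 hπA))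
  exact hle.trans (final_bound h1 h2 _ δ (Real.exp_pos _).le hδ L _ _ hL2
    (Nat.floor_le (by positivity)) (Nat.le_ceil _))

end PW

/-- **The first `δ log L` excursions are short:** for every `δ > 0` there is `κ > 0` such
that with `P_{unif,L}`-probability tending to `1`, the total length of the first
`min(γ_L, ⌊δ log L⌋)` excursions is less than `κ (log L)²`. -/
theorem first_excursions_total_length :
    ∀ δ : ℝ, 0 < δ → ∃ κ : ℝ, 0 < κ ∧
      Tendsto (fun L : ℕ =>
          probUnif L {π |
            κ * Real.log L ^ 2 ≤
              ((∑ i ∈ Finset.Icc 1 (min (numExc L π) ⌊δ * Real.log L⌋₊),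
                excLen L π i : ℕ) : ℝ)})
        atTop (nhds 0) := by
  intro δ hδ
  exact ⟨1, one_pos, PW.main_tendsto δ hδ⟩
end
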